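/- arXiv:1101.2833 — 3 statements merged into one kernel-verified Lean document; each statement's English description precedes it below -/
import Mathlib

section
/- Let n ≥ 1, let Ω ⊂ ℝⁿ be a domain (bounded connected open set), let x̄ ∈ Ω, let F ∈ C⁰(Ω × ℝ × ℝⁿ × S^{n×n}) and let f ∈ USC(Ω). Assume u ∈ LSC(Ω) with inf_Ω u > −∞ is lowerconical at x̄ and satisfies F(x, u, ∇u, ∇²u) ≤ f(x) in Ω ∖ {x̄} in the viscosity sense. Then F(x, u, ∇u, ∇²u) ≤ f(x) in all of Ω in the viscosity sense. -/
open Set Metric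

noncomputable section

/-- ℝⁿ, realized as Euclidean space on `Fin n`. -/
abbrev En (n : ℕ) := EuclideanSpace ℝ (Fin n)

/-- The Hessian matrix `∇²φ(x)` of a real-valued function on ℝⁿ. -/
noncomputable def hess {n : ℕ} (φ : En n → ℝ) (x : En n) : Matrix (Fin n) (Fin n) ℝ :=
  Matrix.of fun i j =>
    iteratedFDeriv ℝ 2 φ x ![EuclideanSpace.single i 1, EuclideanSpace.single j 1]

/-- `u` satisfies `F(x, u, ∇u, ∇²u) ≤ f(x)` in the open set `O` in the viscosity sense:
for every test function `φ ∈ C²(O)` and every `x₀ ∈ O` at which `u - φ` attains a local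
minimum with `u x₀ = φ x₀`, one has `F(x₀, φ(x₀), ∇φ(x₀), ∇²φ(x₀)) ≤ f(x₀)`. -/
def IsViscositySupersolution {n : ℕ}
    (F : En n → ℝ → En n → Matrix (Fin n) (Fin n) ℝ → ℝ)
    (f : En n → ℝ) (O : Set (En n)) (u : En n → ℝ) : Prop :=
  ∀ φ : En n → ℝ, ContDiffOn ℝ 2 φ O → ∀ x₀ ∈ O, u x₀ = φ x₀ →
    IsLocalMinOn (fun x => u x - φ x) O x₀ →
    F x₀ (φ x₀) (gradient φ x₀) (hess φ x₀) ≤ f x₀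

/-- `u` is lowerconical at the point `xb ∈ Ω`: for every `η ∈ C^∞(Ω)` and every `ε > 0`,
`inf_{x ∈ Ω} ((u+η)(x) - (u+η)(xb) - ε‖x - xb‖) < 0`. -/
def LowerConicalAt {n : ℕ} (Ω : Set (En n)) (u : En n → ℝ) (xb : En n) : Prop :=
  ∀ η : En n → ℝ, ContDiffOn ℝ (⊤ : ℕ∞) η Ω → ∀ ε > 0,
    ∃ x ∈ Ω, (u x + η x) - (u xb + η xb) - ε * ‖x - xb‖ < 0

/-!
Let `φ` touch `u` from below at the singular point `a`. Being lowerconical, `u` cannot stay above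
`φ - t ‖x - a‖² + ε ‖x - a‖` near `a`, so it drops strictly below
`φ - t ‖x - a‖² + ⟪p, x - a⟫` somewhere near `a` for some slope `‖p‖ ≤ ε`. As `φ ≤ u` near `a`, this
can only happen at points `x ≠ a` with `‖x - a‖ < ε / t`; adding a small constant, the perturbed
function touches `u` from below at such a point, where the equation is known to hold. Letting the
perturbation tend to zero in `C²` yields the inequality for the 2-jet of `φ` at `a`.
-/

open Filter Topology

theorem le_of_mem_closure_of_semicontinuousWithinAt {X γ : Type*} [TopologicalSpace X]
    [LinearOrder γ] [DenselyOrdered γ] {g h : X → γ} {A : Set X} {x : X}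
    (hg : LowerSemicontinuousWithinAt g A x) (hh : UpperSemicontinuousWithinAt h A x)
    (hx : x ∈ closure A) (hle : ∀ y ∈ A, g y ≤ h y) : g x ≤ h x := by
  have := mem_closure_iff_nhdsWithin_neBot.1 hx
  by_contra! hlt
  obtain ⟨b, hb_left, hb_right⟩ := exists_between hlt
  obtain ⟨y, hby, hyb, hyA⟩ :=
    ((hg b hb_right).and ((hh b hb_left).and self_mem_nhdsWithin)).exists
  exact (hle y hyA).not_gt (hyb.trans hby)

theorem exists_forall_add_mul_le_mul_sq {ρ : ℝ} (hρ : 0 < ρ) (a b C : ℝ) :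
    ∃ M ≥ C, ∀ s ≥ ρ, a + b * s ≤ M * s ^ 2 := by
  refine ⟨max C (|a| / ρ ^ 2 + |b| / ρ), le_max_left _ _, fun s hs => ?_⟩
  have one_le : 1 ≤ s / ρ := (one_le_div hρ).2 hs
  have hs_nonneg : 0 ≤ s := hρ.le.trans hs
  calc a + b * s ≤ |a| * 1 + |b| * s * 1 := by
        simp only [mul_one]
        gcongr <;> exact le_abs_self _
    _ ≤ |a| * (s / ρ) ^ 2 + |b| * s * (s / ρ) := by
        gcongr
        exact one_le_pow₀ one_le
    _ = (|a| / ρ ^ 2 + |b| / ρ) * s ^ 2 := by field_simp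
    _ ≤ max C (|a| / ρ ^ 2 + |b| / ρ) * s ^ 2 := by
        gcongr
        exact le_max_right _ _

section LowerConical

variable {n : ℕ} {Ω : Set (En n)} {u φ : En n → ℝ} {a : En n} {ε : ℝ}

theorem LowerConicalAt.exists_lt_quadratic (hcone : LowerConicalAt Ω u a)
    (L : En n →L[ℝ] ℝ) (M : ℝ) (hε : 0 < ε) :
    ∃ x ∈ Ω, u x < u a + L (x - a) - M * ‖x - a‖ ^ 2 + ε * ‖x - a‖ := by
  have hη : ContDiff ℝ (⊤ : ℕ∞) fun x : En n => M * ‖x - a‖ ^ 2 - L (x - a) := by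
    have := (contDiff_id.sub contDiff_const : ContDiff ℝ (⊤ : ℕ∞) fun x : En n => x - a)
    exact (contDiff_const.mul (this.norm_sq ℝ)).sub (L.contDiff.comp this)
  obtain ⟨x, hxΩ, hx⟩ := hcone _ hη.contDiffOn ε hε
  refine ⟨x, hxΩ, ?_⟩
  simp only [sub_self, map_zero, norm_zero, ne_eq, OfNat.ofNat_ne_zero, not_false_eq_true,
    zero_pow, mul_zero, add_zero] at hx
  linarith

-- Away from `a` the lower bound on `u` excludes the inequality once `C` is replaced by a large `M`.
theorem LowerConicalAt.frequently_lt_quadratic (hcone : LowerConicalAt Ω u a)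
    (hbdd : BddBelow (u '' Ω)) (L : En n →L[ℝ] ℝ) (C : ℝ) (hε : 0 < ε) :
    ∃ᶠ x in 𝓝 a, u x < u a + L (x - a) - C * ‖x - a‖ ^ 2 + ε * ‖x - a‖ := by
  intro hev
  obtain ⟨ρ, hρ, hnear⟩ := Metric.eventually_nhds_iff.1 hev
  obtain ⟨m, hm⟩ := hbdd
  obtain ⟨M, hCM, hM⟩ := exists_forall_add_mul_le_mul_sq hρ (u a - m) (‖L‖ + ε) C
  obtain ⟨x, hxΩ, hx⟩ := hcone.exists_lt_quadratic L M hε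
  rcases lt_or_ge ‖x - a‖ ρ with hxρ | hxρ
  · refine hnear (by rwa [dist_eq_norm]) (hx.trans_le ?_)
    gcongr
  · have hmx : m ≤ u x := hm (mem_image_of_mem u hxΩ)
    have hLx : L (x - a) ≤ ‖L‖ * ‖x - a‖ := (le_abs_self _).trans (L.le_opNorm _)
    linarith [hM ‖x - a‖ hxρ]

theorem LowerConicalAt.frequently_lt_of_differentiableAt (hcone : LowerConicalAt Ω u a)
    (hbdd : BddBelow (u '' Ω)) (hφ : DifferentiableAt ℝ φ a) (hua : u a = φ a)
    (C : ℝ) (hε : 0 < ε) :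
    ∃ᶠ x in 𝓝 a, u x < φ x - C * ‖x - a‖ ^ 2 + ε * ‖x - a‖ := by
  have hlin : ∀ᶠ x in 𝓝 a, ‖φ x - φ a - fderiv ℝ φ a (x - a)‖ ≤ ε / 2 * ‖x - a‖ :=
    hφ.hasFDerivAt.isLittleO.def (half_pos hε)
  refine ((hcone.frequently_lt_quadratic hbdd (fderiv ℝ φ a) C (half_pos hε)).and_eventually
    hlin).mono fun x ⟨hlt, hx⟩ => ?_
  linarith only [hlt, (abs_le.1 hx).1, hua]

end LowerConical

section Touching

/-- `φ` touches `u` from below at `x` relative to `O`: the admissibility condition on a test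
function in the definition of a viscosity supersolution on `O`. -/
def TouchesFromBelowAt {X : Type*} [TopologicalSpace X] (φ u : X → ℝ) (O : Set X) (x : X) : Prop :=
  u x = φ x ∧ IsLocalMinOn (fun y => u y - φ y) O x

variable {E : Type*} [NormedAddCommGroup E] [InnerProductSpace ℝ E]

/-- The perturbation `y ↦ φ(y) - t ‖y - a‖² + ⟪p, y - a⟫ + c` of a test function `φ`, which bends
it down quadratically around `a`, tilts it and shifts it. -/
def quadPerturb (φ : E → ℝ) (a : E) (t : ℝ) (p : E) (c : ℝ) (y : E) : ℝ :=
  φ y - t * ‖y - a‖ ^ 2 + inner ℝ p (y - a) + c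

theorem exists_norm_le_inner_eq_mul_norm (v : E) {ε : ℝ} (hε : 0 ≤ ε) :
    ∃ p : E, ‖p‖ ≤ ε ∧ inner ℝ p v = ε * ‖v‖ := by
  rcases eq_or_ne v 0 with rfl | hv
  · exact ⟨0, by simpa using hε, by simp⟩
  · have hv' : ‖v‖ ≠ 0 := norm_ne_zero_iff.2 hv
    refine ⟨(ε / ‖v‖) • v, ?_, ?_⟩
    · rw [norm_smul, Real.norm_of_nonneg (by positivity), div_mul_cancel₀ _ hv']
    · rw [real_inner_smul_left, real_inner_self_eq_norm_sq]
      field_simp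

variable {u φ : E → ℝ} {a x p : E} {t ρ : ℝ}

theorem norm_sub_mem_Ioo_of_lt_quadPerturb (ht : 0 < t) (hp : ‖p‖ ≤ t * ρ)
    (hφu : φ x ≤ u x) (hlt : u x < quadPerturb φ a t p 0 x) : ‖x - a‖ ∈ Ioo 0 ρ := by
  rw [quadPerturb, add_zero] at hlt
  have hinner : inner ℝ p (x - a) ≤ t * ρ * ‖x - a‖ :=
    (real_inner_le_norm _ _).trans (by gcongr)
  have hsq : ‖x - a‖ * (t * ‖x - a‖) < ‖x - a‖ * (t * ρ) := by linarith
  have hne : ‖x - a‖ ≠ 0 := fun h => by simp [h] at hsq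
  have hpos : 0 < ‖x - a‖ := (norm_nonneg _).lt_of_ne' hne
  exact ⟨hpos, lt_of_mul_lt_mul_left (lt_of_mul_lt_mul_left hsq hpos.le) ht.le⟩

theorem quadPerturb_sub_le (ht : 0 ≤ t) (hp : ‖p‖ ≤ t * ρ) (hφu : φ x ≤ u x)
    (hxρ : ‖x - a‖ ≤ ρ) : quadPerturb φ a t p 0 x - u x ≤ t * ρ ^ 2 :=
  calc quadPerturb φ a t p 0 x - u x ≤ inner ℝ p (x - a) := by
        rw [quadPerturb]
        linarith [mul_nonneg ht (sq_nonneg ‖x - a‖)]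
    _ ≤ ‖p‖ * ‖x - a‖ := real_inner_le_norm _ _
    _ ≤ t * ρ * ρ := mul_le_mul hp hxρ (norm_nonneg _) ((norm_nonneg p).trans hp)
    _ = t * ρ ^ 2 := by ring

theorem exists_touchesFromBelowAt_quadPerturb [ProperSpace E] {r : ℝ} {y : E}
    (hu : LowerSemicontinuousOn u (closedBall a r)) (hφ : ContinuousOn φ (closedBall a r))
    (hφu : ∀ x ∈ closedBall a r, φ x ≤ u x) (ht : 0 < t) (hρr : ρ ≤ r) (hp : ‖p‖ ≤ t * ρ)
    (hy : y ∈ closedBall a r) (hlt : u y < quadPerturb φ a t p 0 y) :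
    ∃ x ∈ ball a ρ, x ≠ a ∧ ∃ c, |c| ≤ t * ρ ^ 2 ∧
      ∀ O, TouchesFromBelowAt (quadPerturb φ a t p c) u O x := by
  have hcont : ContinuousOn (quadPerturb φ a t p 0) (closedBall a r) := by
    unfold quadPerturb
    fun_prop
  obtain ⟨x, hx, hmin⟩ := (hu.add hcont.neg.lowerSemicontinuousOn).exists_isMinOn ⟨y, hy⟩
    (isCompact_closedBall a r)
  have hmin' : ∀ z ∈ closedBall a r,
      u x - quadPerturb φ a t p 0 x ≤ u z - quadPerturb φ a t p 0 z := fun z hz => by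
    simpa only [sub_eq_add_neg, Pi.neg_apply] using isMinOn_iff.1 hmin z hz
  have hltx : u x < quadPerturb φ a t p 0 x := by linarith [hmin' y hy]
  obtain ⟨hpos, hxρ⟩ := norm_sub_mem_Ioo_of_lt_quadPerturb ht hp (hφu x hx) hltx
  have hgap := quadPerturb_sub_le ht.le hp (hφu x hx) hxρ.le
  rw [← dist_eq_norm] at hpos hxρ
  refine ⟨x, hxρ, dist_pos.1 hpos, u x - quadPerturb φ a t p 0 x, ?_, fun O => ⟨?_, ?_⟩⟩
  · rwa [abs_of_neg (sub_neg.2 hltx), neg_sub]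
  · simp only [quadPerturb]
    ring
  · refine IsLocalMin.on ?_ O
    filter_upwards [closedBall_mem_nhds_of_mem (show x ∈ ball a r from hxρ.trans_le hρr)] with z hz
    have := hmin' z hz
    simp only [quadPerturb] at this ⊢
    linarith

end Touching

section Derivatives

variable {E : Type*} [NormedAddCommGroup E] [InnerProductSpace ℝ E]
  {φ : E → ℝ} {a x p : E} {t c : ℝ}

theorem contDiffOn_quadPerturb {k : WithTop ℕ∞} {O : Set E} (hφ : ContDiffOn ℝ k φ O) :
    ContDiffOn ℝ k (quadPerturb φ a t p c) O := by
  have hsub : ContDiffOn ℝ k (fun y : E => y - a) O := contDiffOn_id.sub contDiffOn_const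
  exact ((hφ.sub (contDiffOn_const.mul (hsub.norm_sq ℝ))).add
    (contDiffOn_const.inner ℝ hsub)).add contDiffOn_const

theorem hasFDerivAt_quadPerturb {φ' : E →L[ℝ] ℝ} (hφ : HasFDerivAt φ φ' x) :
    HasFDerivAt (quadPerturb φ a t p c) (φ' - (2 * t) • innerSL ℝ (x - a) + innerSL ℝ p) x := by
  have hsub : HasFDerivAt (fun y : E => y - a) (ContinuousLinearMap.id ℝ E) x :=
    (hasFDerivAt_id x).sub_const a
  have hlin := (innerSL ℝ p).hasFDerivAt.comp x hsub
  refine (((hφ.sub (hsub.norm_sq.const_mul t)).add hlin).add_const c).congr_fderiv ?_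
  ext v
  simp [mul_left_comm, mul_assoc]

theorem gradient_quadPerturb [CompleteSpace E] (hφ : DifferentiableAt ℝ φ x) :
    gradient (quadPerturb φ a t p c) x = gradient φ x - (2 * t) • (x - a) + p := by
  refine HasGradientAt.gradient (hasGradientAt_iff_hasFDerivAt.2 ?_)
  refine (hasFDerivAt_quadPerturb hφ.hasFDerivAt).congr_fderiv ?_
  ext v
  simp

theorem fderiv_fderiv_quadPerturb_apply (hφ : ContDiffAt ℝ 2 φ x) (v w : E) :
    fderiv ℝ (fderiv ℝ (quadPerturb φ a t p c)) x v w =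
      fderiv ℝ (fderiv ℝ φ) x v w - 2 * t * inner ℝ v w := by
  have hfirst : fderiv ℝ (quadPerturb φ a t p c) =ᶠ[𝓝 x]
      fun y => fderiv ℝ φ y - (2 * t) • innerSL ℝ (y - a) + innerSL ℝ p := by
    filter_upwards [hφ.eventually (by simp)] with y hy
    exact (hasFDerivAt_quadPerturb (hy.differentiableAt two_ne_zero).hasFDerivAt).fderiv
  have hφ'' : HasFDerivAt (fderiv ℝ φ) (fderiv ℝ (fderiv ℝ φ) x) x :=
    ((hφ.fderiv_right (m := 1) (by norm_num)).differentiableAt one_ne_zero).hasFDerivAt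
  have hinner : HasFDerivAt (fun y : E => innerSL ℝ (y - a)) (innerSL ℝ) x :=
    (innerSL ℝ).hasFDerivAt.comp x ((hasFDerivAt_id x).sub_const a)
  rw [hfirst.fderiv_eq, ((hφ''.fun_sub (hinner.fun_const_smul (2 * t))).add_const _).fderiv]
  rfl

theorem continuousAt_gradient [CompleteSpace E] (hφ : ContDiffAt ℝ 1 φ x) :
    ContinuousAt (gradient φ) x :=
  (InnerProductSpace.toDual ℝ E).symm.continuous.continuousAt.comp
    (hφ.fderiv_right (m := 0) (by norm_num)).continuousAt

end Derivatives

section Jets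

variable {n : ℕ} {φ u : En n → ℝ} {a x p : En n} {t c : ℝ} {O Ω : Set (En n)}

theorem hess_quadPerturb (hφ : ContDiffAt ℝ 2 φ x) :
    hess (quadPerturb φ a t p c) x = hess φ x - (2 * t) • 1 := by
  ext i j
  simp only [hess, Matrix.of_apply, Matrix.sub_apply, Matrix.smul_apply, iteratedFDeriv_two_apply,
    fderiv_fderiv_quadPerturb_apply hφ]
  simp [EuclideanSpace.inner_single_left, Matrix.one_apply]

theorem continuousAt_hess (hφ : ContDiffAt ℝ 2 φ x) : ContinuousAt (hess φ) x := by
  refine continuousAt_pi.2 fun i => continuousAt_pi.2 fun j => ?_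
  exact (ContinuousMultilinearMap.apply ℝ (fun _ : Fin 2 => En n) ℝ
    ![EuclideanSpace.single i 1, EuclideanSpace.single j 1]).continuous.continuousAt.comp
      (hφ.iteratedFDeriv_right (m := 0) (by norm_num)).continuousAt

/-- The 2-jet `(x, φ(x), ∇φ(x), ∇²φ(x))` of `φ` at `x`, the argument at which the operator `F` of
the equation is evaluated. -/
def jet (φ : En n → ℝ) (x : En n) : En n × ℝ × En n × Matrix (Fin n) (Fin n) ℝ :=
  (x, φ x, gradient φ x, hess φ x)

/-- The second-order subjets of `u` over `O`: all 2-jets of `C²` functions touching `u` from below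
at a point of `O`. The base point is part of the jet, so that limits may be taken across points. -/
def subjets (u : En n → ℝ) (O : Set (En n)) : Set (En n × ℝ × En n × Matrix (Fin n) (Fin n) ℝ) :=
  {q | ∃ φ x, ContDiffOn ℝ 2 φ O ∧ x ∈ O ∧ TouchesFromBelowAt φ u O x ∧ jet φ x = q}

theorem IsViscositySupersolution.le_of_mem_subjets
    {F : En n → ℝ → En n → Matrix (Fin n) (Fin n) ℝ → ℝ} {f : En n → ℝ}
    (h : IsViscositySupersolution F f O u) {q : En n × ℝ × En n × Matrix (Fin n) (Fin n) ℝ}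
    (hq : q ∈ subjets u O) : F q.1 q.2.1 q.2.2.1 q.2.2.2 ≤ f q.1 := by
  obtain ⟨φ, x, hφ, hx, ⟨heq, hmin⟩, rfl⟩ := hq
  exact h φ hφ x hx heq hmin

theorem subjets_subset_fst_mem : subjets u O ⊆ {q | q.1 ∈ O} := by
  rintro _ ⟨φ, x, -, hx, -, rfl⟩
  exact hx

theorem jet_quadPerturb_zero : jet (quadPerturb φ a 0 0 0) x = jet φ x := by
  have : quadPerturb φ a 0 0 0 = φ := by
    ext y
    simp [quadPerturb]
  rw [this]

theorem continuousAt_jet_quadPerturb (hφ : ContDiffAt ℝ 2 φ a) :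
    ContinuousAt (fun w : ℝ × En n × ℝ × En n =>
      jet (quadPerturb φ a w.1 w.2.1 w.2.2.1) w.2.2.2) (0, 0, 0, a) := by
  have hbase : Tendsto (fun w : ℝ × En n × ℝ × En n => w.2.2.2) (𝓝 (0, 0, 0, a)) (𝓝 a) :=
    Continuous.tendsto (by fun_prop) _
  have hgrad : ContinuousAt (fun w : ℝ × En n × ℝ × En n => gradient φ w.2.2.2) (0, 0, 0, a) :=
    (continuousAt_gradient (hφ.of_le one_le_two)).tendsto.comp hbase
  have hhess : ContinuousAt (fun w : ℝ × En n × ℝ × En n => hess φ w.2.2.2) (0, 0, 0, a) :=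
    (continuousAt_hess hφ).tendsto.comp hbase
  have hformula : ContinuousAt (fun w : ℝ × En n × ℝ × En n =>
      (w.2.2.2, φ w.2.2.2 - w.1 * ‖w.2.2.2 - a‖ ^ 2 + inner ℝ w.2.1 (w.2.2.2 - a) + w.2.2.1,
        gradient φ w.2.2.2 - (2 * w.1) • (w.2.2.2 - a) + w.2.1,
        hess φ w.2.2.2 - (2 * w.1) • (1 : Matrix (Fin n) (Fin n) ℝ))) (0, 0, 0, a) := by
    fun_prop
  refine hformula.congr ?_
  filter_upwards [hbase.eventually (hφ.eventually (by simp))] with w hw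
  rw [jet, gradient_quadPerturb (hw.differentiableAt two_ne_zero), hess_quadPerturb hw, quadPerturb]

theorem LowerConicalAt.mem_closure_touchesFromBelowAt_quadPerturb (hcone : LowerConicalAt Ω u a)
    (hΩ : IsOpen Ω) (ha : a ∈ Ω) (hu : LowerSemicontinuousOn u Ω) (hbdd : BddBelow (u '' Ω))
    (hφ : ContDiffOn ℝ 2 φ Ω) (htouch : TouchesFromBelowAt φ u Ω a) :
    (0, 0, 0, a) ∈ closure {w : ℝ × En n × ℝ × En n | w.2.2.2 ∈ Ω \ {a} ∧
      TouchesFromBelowAt (quadPerturb φ a w.1 w.2.1 w.2.2.1) u (Ω \ {a}) w.2.2.2} := by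
  obtain ⟨hua, hmin⟩ := htouch
  have hΩa : Ω ∈ 𝓝 a := hΩ.mem_nhds ha
  have hnear : ∀ᶠ x in 𝓝 a, x ∈ Ω ∧ φ x ≤ u x := by
    filter_upwards [hΩa, hmin.isLocalMin hΩa] with x hxΩ hx
    exact ⟨hxΩ, by linarith⟩
  obtain ⟨r, hr, hball⟩ := nhds_basis_closedBall.eventually_iff.1 hnear
  have hsub : closedBall a r ⊆ Ω := fun x hx => (hball hx).1
  refine Metric.mem_closure_iff.2 fun δ hδ => ?_
  obtain ⟨t, ht, htδ⟩ := exists_between (lt_min hδ one_pos)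
  obtain ⟨htδ, ht1⟩ := lt_min_iff.1 htδ
  obtain ⟨ρ, hρ, hρrt⟩ := exists_between (lt_min hr ht)
  obtain ⟨hρr, hρt⟩ := lt_min_iff.1 hρrt
  obtain ⟨y, hlt, hy⟩ := ((hcone.frequently_lt_of_differentiableAt hbdd
    ((hφ.contDiffAt hΩa).differentiableAt two_ne_zero) hua t (mul_pos ht hρ)).and_eventually
      (closedBall_mem_nhds a hr)).exists
  obtain ⟨p, hp, hpy⟩ := exists_norm_le_inner_eq_mul_norm (y - a) (mul_pos ht hρ).le
  obtain ⟨x, hxρ, hxa, c, hc, hx⟩ := exists_touchesFromBelowAt_quadPerturb (hu.mono hsub)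
    (hφ.continuousOn.mono hsub) (fun z hz => (hball hz).2) ht hρr.le hp hy
    (by rwa [quadPerturb, hpy, add_zero])
  refine ⟨(t, p, c, x), ⟨⟨hsub (hxρ.le.trans hρr.le), hxa⟩, hx _⟩, ?_⟩
  have hρ1 : ρ ≤ 1 := (hρt.trans ht1).le
  have hpδ : ‖p‖ < δ := (hp.trans (mul_le_of_le_one_right ht.le hρ1)).trans_lt htδ
  have hcδ : |c| < δ :=
    (hc.trans (mul_le_of_le_one_right ht.le (pow_le_one₀ hρ.le hρ1))).trans_lt htδ
  simpa [Prod.dist_eq, abs_of_pos ht, dist_comm a x] using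
    ⟨htδ, hpδ, hcδ, (mem_ball.1 hxρ).trans (hρt.trans htδ)⟩

theorem LowerConicalAt.jet_mem_closure_subjets (hcone : LowerConicalAt Ω u a)
    (hΩ : IsOpen Ω) (ha : a ∈ Ω) (hu : LowerSemicontinuousOn u Ω) (hbdd : BddBelow (u '' Ω))
    (hφ : ContDiffOn ℝ 2 φ Ω) (htouch : TouchesFromBelowAt φ u Ω a) :
    jet φ a ∈ closure (subjets u (Ω \ {a})) := by
  rw [← jet_quadPerturb_zero (a := a)]
  refine (continuousAt_jet_quadPerturb
    (hφ.contDiffAt (hΩ.mem_nhds ha))).continuousWithinAt.mem_closure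
    (hcone.mem_closure_touchesFromBelowAt_quadPerturb hΩ ha hu hbdd hφ htouch) ?_
  rintro ⟨t, p, c, x⟩ ⟨hx, htouch_x⟩
  exact ⟨_, x, contDiffOn_quadPerturb (hφ.mono sdiff_subset), hx, htouch_x, rfl⟩

end Jets

theorem removable_point_singularity_general {n : ℕ} {Ω : Set (En n)} (hΩ : IsOpen Ω) {a : En n}
    {F : En n → ℝ → En n → Matrix (Fin n) (Fin n) ℝ → ℝ}
    (hF : ∀ v p X, LowerSemicontinuousWithinAt
      (fun q : En n × ℝ × En n × Matrix (Fin n) (Fin n) ℝ => F q.1 q.2.1 q.2.2.1 q.2.2.2)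
      {q | q.1 ∈ Ω} (a, v, p, X))
    {f : En n → ℝ} (hf : UpperSemicontinuousWithinAt f Ω a)
    {u : En n → ℝ} (hu : LowerSemicontinuousOn u Ω) (hbdd : BddBelow (u '' Ω))
    (hcone : LowerConicalAt Ω u a) (hvisc : IsViscositySupersolution F f (Ω \ {a}) u) :
    IsViscositySupersolution F f Ω u := by
  intro φ hφ x hx hux hmin
  rcases eq_or_ne x a with rfl | hxa
  · have hsub : subjets u (Ω \ {x}) ⊆ {q | q.1 ∈ Ω} :=
      subjets_subset_fst_mem.trans fun _ hq => hq.1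
    have hf' : UpperSemicontinuousWithinAt
        (fun q : En n × ℝ × En n × Matrix (Fin n) (Fin n) ℝ => f q.1)
        (subjets u (Ω \ {x})) (jet φ x) :=
      UpperSemicontinuousWithinAt.comp hf continuous_fst.continuousWithinAt hsub
    exact le_of_mem_closure_of_semicontinuousWithinAt ((hF _ _ _).mono hsub) hf'
      (hcone.jet_mem_closure_subjets hΩ hx hu hbdd hφ ⟨hux, hmin⟩)
      fun _ => hvisc.le_of_mem_subjets
  · exact hvisc φ (hφ.mono sdiff_subset) x ⟨hx, hxa⟩ hux (hmin.on_subset sdiff_subset)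

/-- **Theorem 1.1.** A viscosity supersolution on `Ω \ {xb}` which is lowerconical at `xb`
is a viscosity supersolution on all of `Ω`. -/
theorem removable_point_singularity
    {n : ℕ} (hn : 1 ≤ n) (Ω : Set (En n))
    (hΩopen : IsOpen Ω) (hΩconn : IsConnected Ω) (hΩbdd : Bornology.IsBounded Ω)
    (xb : En n) (hxb : xb ∈ Ω)
    (F : En n → ℝ → En n → Matrix (Fin n) (Fin n) ℝ → ℝ)
    (hFcont : ContinuousOn
      (fun q : En n × ℝ × En n × Matrix (Fin n) (Fin n) ℝ => F q.1 q.2.1 q.2.2.1 q.2.2.2)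
      {q | q.1 ∈ Ω})
    (f : En n → ℝ) (hf : UpperSemicontinuousOn f Ω)
    (u : En n → ℝ) (hu : LowerSemicontinuousOn u Ω) (hubd : BddBelow (u '' Ω))
    (hcone : LowerConicalAt Ω u xb)
    (hvisc : IsViscositySupersolution F f (Ω \ {xb}) u) :
    IsViscositySupersolution F f Ω u := by
  exact removable_point_singularity_general hΩopen
    (fun _ _ _ => (hFcont _ hxb).lowerSemicontinuousWithinAt) (hf xb hxb) hu hubd hcone hvisc
end
end

section
/- Let Ω ⊂ ℝⁿ be a domain (bounded connected open set), F ∈ C⁰(Ω × ℝ × ℝⁿ × S^{n×n}), and suppose that for every β > 0, limsup_{a→∞} inf{ F(x, s, p, aI) : x ∈ Ω, |(s,p)| ≤ β } = ∞. Let f : Ω → ℝ satisfy sup_Ω f < ∞. If u ∈ LSC(Ω) satisfies inf_Ω u > −∞ and F(x, u, ∇u, ∇²u) ≤ f(x) in Ω in the viscosity sense, then u is lowerconical at every point of Ω. -/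
open Set Metric

noncomputable section

/-! If `u` were not lowerconical at `x̄`, then `u + η ≥ (u + η)(x̄) + ε|x - x̄|` on `Ω` for some
smooth `η` and `ε > 0`. The cone beats every function that is flat to first order at `x̄`, so every
quadratic polynomial with value `u(x̄)` and gradient `-∇η(x̄)` at `x̄` touches `u` from below there,
*whatever its Hessian*. Being a supersolution then forces `F(x̄, u(x̄), -∇η(x̄), X) ≤ f(x̄)` for all
symmetric `X`, which contradicts the growth of `F` along `X = aI`. -/

section Cone

variable {E : Type*} [NormedAddCommGroup E] [NormedSpace ℝ E]

lemma isLocalMinOn_sub_of_cone_le {v ψ : E → ℝ} {ψ' : E →L[ℝ] ℝ} {s : Set E} {x₀ : E} {ε : ℝ}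
    (hv : ∀ x ∈ s, v x₀ + ε * ‖x - x₀‖ ≤ v x) (hψ : HasFDerivWithinAt ψ ψ' s x₀)
    (hψ' : ‖ψ'‖ < ε) : IsLocalMinOn (fun x => v x - ψ x) s x₀ := by
  have hψ_growth : ∀ᶠ x in nhdsWithin x₀ s, ‖ψ x - ψ x₀‖ ≤ ε * ‖x - x₀‖ := by
    simpa using (hψ.isLittleO.add_isBigOWith (ψ'.isBigOWith_comp _ _) hψ').bound
  filter_upwards [hψ_growth, self_mem_nhdsWithin] with x hx hxs
  linarith [hv x hxs, (Real.le_norm_self _).trans hx]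

end Cone

section QuadraticJet

variable {E : Type*} [NormedAddCommGroup E] [InnerProductSpace ℝ E]

/-- The quadratic polynomial whose second-order Taylor data at `x₀` are the value `c`, the gradient
`p` and the Hessian `T`. It is the test function for the viscosity inequality; `T` is meant to be
symmetric. -/
def quadraticJet (c : ℝ) (p : E) (T : E →L[ℝ] E) (x₀ x : E) : ℝ :=
  c + inner ℝ p (x - x₀) + 1 / 2 * inner ℝ (T (x - x₀)) (x - x₀)

variable (c : ℝ) (p : E) {T : E →L[ℝ] E} (x₀ : E)

variable (T) in
lemma quadraticJet_self : quadraticJet c p T x₀ x₀ = c := by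
  simp [quadraticJet]

variable (T) in
lemma contDiff_quadraticJet {k : WithTop ℕ∞} : ContDiff ℝ k (quadraticJet c p T x₀) := by
  have hsub : ContDiff ℝ k fun x => x - x₀ := contDiff_id.sub contDiff_const
  exact (contDiff_const.add (contDiff_const.inner ℝ hsub)).add
    (contDiff_const.mul ((T.contDiff.comp hsub).inner ℝ hsub))

lemma hasFDerivAt_quadraticJet (hT : T.IsSymmetric) (x : E) :
    HasFDerivAt (quadraticJet c p T x₀) (innerSL ℝ (p + T (x - x₀))) x := by
  have hsub : HasFDerivAt (fun y => y - x₀) (ContinuousLinearMap.id ℝ E) x :=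
    (hasFDerivAt_id x).sub_const x₀
  have hlinear := (hasFDerivAt_const p x).inner ℝ hsub
  have hquadratic := ((T.hasFDerivAt.comp x hsub).inner ℝ hsub).const_mul (1 / 2)
  refine ((hlinear.const_add c).add hquadratic).congr_fderiv ?_
  ext v
  have hsymm : inner ℝ (T v) (x - x₀) = inner ℝ (T (x - x₀)) v := by
    rw [real_inner_comm]
    exact (hT (x - x₀) v).symm
  simp only [Function.comp_apply, ContinuousLinearMap.comp_id, add_apply,
    ContinuousLinearMap.comp_apply, ContinuousLinearMap.prod_apply, zero_apply,
    ContinuousLinearMap.id_apply, fderivInnerCLM_apply, inner_zero_left, smul_apply, hsymm,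
    smul_eq_mul, map_add, coe_innerSL_apply]
  ring

lemma hasGradientAt_quadraticJet [CompleteSpace E] (hT : T.IsSymmetric) (x : E) :
    HasGradientAt (quadraticJet c p T x₀) (p + T (x - x₀)) x :=
  hasGradientAt_iff_hasFDerivAt.2 (hasFDerivAt_quadraticJet c p x₀ hT x)

lemma gradient_quadraticJet_self [CompleteSpace E] (hT : T.IsSymmetric) :
    gradient (quadraticJet c p T x₀) x₀ = p := by
  simpa using (hasGradientAt_quadraticJet c p x₀ hT x₀).gradient

lemma iteratedFDeriv_two_quadraticJet (hT : T.IsSymmetric) (x v w : E) :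
    iteratedFDeriv ℝ 2 (quadraticJet c p T x₀) x ![v, w] = inner ℝ (T v) w := by
  have hfderiv : fderiv ℝ (quadraticJet c p T x₀) = fun y => innerSL ℝ (p + T (y - x₀)) :=
    funext fun y => (hasFDerivAt_quadraticJet c p x₀ hT y).fderiv
  have hgrad : HasFDerivAt (fun y => p + T (y - x₀)) T x :=
    (T.hasFDerivAt.comp x ((hasFDerivAt_id x).sub_const x₀)).const_add p
  have hfderiv₂ := ((innerSL ℝ : E →L[ℝ] E →L[ℝ] ℝ).hasFDerivAt.comp x hgrad).fderiv
  rw [iteratedFDeriv_two_apply, hfderiv]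
  exact congrArg (fun L : E →L[ℝ] E →L[ℝ] ℝ => L v w) hfderiv₂

end QuadraticJet

section Euclidean

open Matrix in
lemma isSymmetric_toEuclideanCLM {ι : Type*} [Fintype ι] [DecidableEq ι] {X : Matrix ι ι ℝ}
    (hX : X.IsSymm) : (toEuclideanCLM (𝕜 := ℝ) X).IsSymmetric := by
  rw [coe_toEuclideanCLM_eq_toEuclideanLin]
  exact isSymmetric_toEuclideanLin_iff.2 (isHermitian_iff_isSymm.2 hX)

variable {n : ℕ}

lemma hess_quadraticJet (c : ℝ) (p x₀ x : En n) {X : Matrix (Fin n) (Fin n) ℝ} (hX : X.IsSymm) :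
    hess (quadraticJet c p (Matrix.toEuclideanCLM (𝕜 := ℝ) X) x₀) x = X := by
  ext i j
  rw [hess, Matrix.of_apply,
    iteratedFDeriv_two_quadraticJet c p x₀ (isSymmetric_toEuclideanCLM hX)]
  simp [EuclideanSpace.inner_single_right, hX.apply i j]

variable {Ω : Set (En n)} {F : En n → ℝ → En n → Matrix (Fin n) (Fin n) ℝ → ℝ} {f u : En n → ℝ}

lemma IsViscositySupersolution.le_of_cone_le (hu : IsViscositySupersolution F f Ω u)
    {η : En n → ℝ} {x₀ g : En n} {ε : ℝ} (hx₀ : x₀ ∈ Ω) (hε : 0 < ε)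
    (hη : HasGradientWithinAt η g Ω x₀)
    (hcone : ∀ x ∈ Ω, u x₀ + η x₀ + ε * ‖x - x₀‖ ≤ u x + η x)
    {X : Matrix (Fin n) (Fin n) ℝ} (hX : X.IsSymm) :
    F x₀ (u x₀) (-g) X ≤ f x₀ := by
  have hT := isSymmetric_toEuclideanCLM hX
  set φ := quadraticJet (u x₀) (-g) (Matrix.toEuclideanCLM (𝕜 := ℝ) X) x₀
  have hφ₀ : φ x₀ = u x₀ := quadraticJet_self ..
  have hflat : HasFDerivWithinAt (φ + η) (0 : En n →L[ℝ] ℝ) Ω x₀ := by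
    refine ((hasGradientAt_quadraticJet (u x₀) (-g) x₀ hT x₀).hasFDerivAt.hasFDerivWithinAt.add
      hη.hasFDerivWithinAt).congr_fderiv ?_
    simp
  have hmin : IsLocalMinOn (fun x => u x - φ x) Ω x₀ := by
    simpa using isLocalMinOn_sub_of_cone_le (v := u + η) hcone hflat (by simpa using hε)
  have hvisc := hu φ (contDiff_quadraticJet ..).contDiffOn x₀ hx₀ hφ₀.symm hmin
  rwa [hφ₀, gradient_quadraticJet_self _ _ _ hT, hess_quadraticJet _ _ _ _ hX] at hvisc

lemma exists_isSymm_lt_of_unbounded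
    (hF : ∀ β > (0 : ℝ), ∀ K : ℝ, ∃ a : ℝ, ∀ x ∈ Ω, ∀ (s : ℝ) (p : En n), |s| ≤ β → ‖p‖ ≤ β →
      K ≤ F x s p (a • (1 : Matrix (Fin n) (Fin n) ℝ)))
    (hf : BddAbove (f '' Ω)) {x : En n} (hx : x ∈ Ω) (s : ℝ) (p : En n) :
    ∃ X : Matrix (Fin n) (Fin n) ℝ, X.IsSymm ∧ f x < F x s p X := by
  obtain ⟨M, hM⟩ := hf
  obtain ⟨a, ha⟩ := hF (max 1 (max |s| ‖p‖)) (by positivity) (M + 1)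
  have hfM : f x ≤ M := hM (mem_image_of_mem f hx)
  exact ⟨a • 1, Matrix.isSymm_one.smul a, by linarith [ha x hx s p (by simp) (by simp)]⟩

theorem supersolution_is_lowerconical_general {xb : En n}
    (hxb : xb ∈ Ω) (hF : ∀ p, ∃ X : Matrix (Fin n) (Fin n) ℝ, X.IsSymm ∧ f xb < F xb (u xb) p X)
    (hvisc : IsViscositySupersolution F f Ω u) : LowerConicalAt Ω u xb := by
  intro η hη ε hε
  by_contra! hcone
  have hη_grad := (hη.differentiableOn (by simp) xb hxb).hasGradientWithinAt
  obtain ⟨X, hX, hlt⟩ := hF (-gradientWithin η Ω xb)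
  refine hlt.not_ge (hvisc.le_of_cone_le hxb hε hη_grad (fun x hx => ?_) hX)
  linarith [hcone x hx]

end Euclidean

/-- **Remark 1.2.** If `F` satisfies
`limsup_{a → ∞} inf {F(x,s,p,aI) : x ∈ Ω, |(s,p)| ≤ β} = ∞` for every `β > 0`, and
`sup_Ω f < ∞`, then every bounded-below viscosity supersolution `u` of
`F(x,u,∇u,∇²u) ≤ f` in `Ω` is lowerconical at every point of `Ω`. -/
theorem supersolution_is_lowerconical
    {n : ℕ} (Ω : Set (En n))
    (hΩopen : IsOpen Ω) (hΩconn : IsConnected Ω) (hΩbdd : Bornology.IsBounded Ω)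
    (F : En n → ℝ → En n → Matrix (Fin n) (Fin n) ℝ → ℝ)
    (hFcont : ContinuousOn
      (fun q : En n × ℝ × En n × Matrix (Fin n) (Fin n) ℝ => F q.1 q.2.1 q.2.2.1 q.2.2.2)
      {q | q.1 ∈ Ω})
    (hFlim : ∀ β > (0 : ℝ), ∀ K A : ℝ, ∃ a : ℝ, A ≤ a ∧
      ∀ x ∈ Ω, ∀ (s : ℝ) (p : En n), |s| ≤ β → ‖p‖ ≤ β →
        K ≤ F x s p (a • (1 : Matrix (Fin n) (Fin n) ℝ)))
    (f : En n → ℝ) (hfbd : BddAbove (f '' Ω))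
    (u : En n → ℝ) (hu : LowerSemicontinuousOn u Ω) (hubd : BddBelow (u '' Ω))
    (hvisc : IsViscositySupersolution F f Ω u) :
    ∀ xb ∈ Ω, LowerConicalAt Ω u xb :=
  fun xb hxb => supersolution_is_lowerconical_general hxb (exists_isSymm_lt_of_unbounded
    (fun β hβ K => (hFlim β hβ K 0).imp fun _ h => h.2) hfbd hxb (u xb)) hvisc
end
end

section
/- Let Ω ⊂ ℝⁿ be a bounded domain with C² boundary, let a_ij, b_i, c ∈ L^∞(Ω) satisfy the uniform ellipticity and boundedness conditions with constants λ, Λ, and let B ⊂ Ω be a ball of radius δ. Then there exist positive constants ε̄ and μ̄, depending only on n, λ, Λ, δ, and Ω, such that: if u ∈ LSC(Ω) satisfies a_ij(x)∂_ij u + b_i(x)∂_i u + c(x)u ≤ ε̄ in Ω in the viscosity sense, u ≥ 0 in Ω, and u ≥ 1 on B, then u(x) ≥ μ̄ · dist(x, ∂Ω) for all x ∈ Ω. -/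
open Set Metric

noncomputable section

/-- The linear operator `a_ij(x) ∂_ij u + b_i(x) ∂_i u + c(x) u`, written as a function of
`(x, s, p, M) = (x, u, ∇u, ∇²u)`. -/
def linOp {n : ℕ} (a : En n → Matrix (Fin n) (Fin n) ℝ) (b : En n → En n) (c : En n → ℝ) :
    En n → ℝ → En n → Matrix (Fin n) (Fin n) ℝ → ℝ :=
  fun x s p M => (∑ i, ∑ j, a x i j * M i j) + (∑ i, b x i * p i) + c x * s

/-- The coefficients `a_ij, b_i, c` are bounded by `Lam` and uniformly elliptic with
constant `lam` on `Ω`. -/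
def EllipticCoeffs {n : ℕ} (Ω : Set (En n)) (a : En n → Matrix (Fin n) (Fin n) ℝ)
    (b : En n → En n) (c : En n → ℝ) (lam Lam : ℝ) : Prop :=
  (∀ x ∈ Ω, ∀ i j, |a x i j| + |b x i| + |c x| ≤ Lam) ∧
  (∀ x ∈ Ω, ∀ ξ : En n, lam * ‖ξ‖ ^ 2 ≤ ∑ i, ∑ j, a x i j * ξ i * ξ j)

/-- `Ω` has `C²` boundary: near every boundary point there is a `C²` local defining
function with nonvanishing gradient. -/
def HasC2Boundary {n : ℕ} (Ω : Set (En n)) : Prop :=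
  ∀ x ∈ frontier Ω, ∃ (U : Set (En n)) (ρ : En n → ℝ),
    IsOpen U ∧ x ∈ U ∧ ContDiffOn ℝ 2 ρ U ∧
    Ω ∩ U = {y ∈ U | ρ y < 0} ∧ frontier Ω ∩ U = {y ∈ U | ρ y = 0} ∧
    ∀ y ∈ frontier Ω ∩ U, gradient ρ y ≠ 0

/-!
For large `α`, a Gaussian `m * exp (-α|x - y|²)`, lowered by a constant so as to vanish on
`∂B_r(y)`, is a strict subsolution in the annulus between `B_ρ(y)` and `B_r(y)`. It therefore lies
below every nonnegative supersolution which is at least `m` on `B_ρ(y)`, and such a supersolution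
grows at least linearly in the distance to `∂B_r(y)`. All constants scale with `m`, hence the
estimate can be iterated: as `Ω` is connected, positivity on one ball propagates to every point of
`Ω`, uniformly over compact sets of pairs (center of the given ball, target point). Finally, a `C²`
boundary provides interior tangent balls of a uniform radius. The one touching `∂Ω` at a boundary
point nearest to `x` is centered on the line through that point and `x`, so that the linear growth
in this ball is measured by `dist(x, ∂Ω)`.
-/

open Filter Topology
open scoped RealInnerProductSpace

section GaussianBump

variable {E : Type*} [NormedAddCommGroup E]

/-- The Gaussian of height `m` centered at `y`, the barrier of Hopf's argument: for large `α` it is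
a strict subsolution away from its center. -/
def gaussianBump (y : E) (α m : ℝ) (x : E) : ℝ := m * Real.exp (-α * ‖x - y‖ ^ 2)

lemma gaussianBump_pos (y : E) (α : ℝ) {m : ℝ} (hm : 0 < m) (x : E) : 0 < gaussianBump y α m x :=
  mul_pos hm (Real.exp_pos _)

lemma gaussianBump_le (y : E) {α m : ℝ} (hα : 0 ≤ α) (hm : 0 ≤ m) (x : E) :
    gaussianBump y α m x ≤ m :=
  mul_le_of_le_one_right hm <| Real.exp_le_one_iff.2 <|
    mul_nonpos_of_nonpos_of_nonneg (neg_nonpos.2 hα) (sq_nonneg _)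

variable [InnerProductSpace ℝ E]

lemma contDiff_gaussianBump (y : E) (α m : ℝ) {k : WithTop ℕ∞} :
    ContDiff ℝ k (gaussianBump y α m) := by
  unfold gaussianBump
  have hsq : ContDiff ℝ k fun x : E => ‖x - y‖ ^ 2 := (contDiff_id.sub contDiff_const).norm_sq ℝ
  exact contDiff_const.mul (contDiff_const.mul hsq).exp

lemma hasFDerivAt_gaussianBump (y : E) (α m : ℝ) (x : E) :
    HasFDerivAt (gaussianBump y α m) (gaussianBump y α (-2 * α * m) x • innerSL ℝ (x - y)) x := by
  have hsq := ((hasFDerivAt_id (𝕜 := ℝ) x).sub_const y).norm_sq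
  refine ((hsq.const_mul (-α)).exp.const_mul m).congr_fderiv ?_
  ext v
  simp only [ContinuousLinearMap.comp_id, smul_apply, innerSL_apply_apply, nsmul_eq_mul,
    Nat.cast_ofNat, smul_eq_mul, gaussianBump, id_eq]
  ring

lemma gradient_gaussianBump [CompleteSpace E] (y : E) (α m : ℝ) (x : E) :
    gradient (gaussianBump y α m) x = gaussianBump y α (-2 * α * m) x • (x - y) := by
  refine HasGradientAt.gradient ?_
  rw [hasGradientAt_iff_hasFDerivAt]
  refine (hasFDerivAt_gaussianBump y α m x).congr_fderiv ?_
  ext v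
  simp

lemma iteratedFDeriv_two_gaussianBump (y : E) (α m : ℝ) (x v w : E) :
    iteratedFDeriv ℝ 2 (gaussianBump y α m) x ![v, w] =
      gaussianBump y α m x * (4 * α ^ 2 * (⟪x - y, v⟫ * ⟪x - y, w⟫) - 2 * α * ⟪v, w⟫) := by
  have hfderiv : fderiv ℝ (gaussianBump y α m) =
      fun x => gaussianBump y α (-2 * α * m) x • innerSL ℝ (x - y) :=
    funext fun x => (hasFDerivAt_gaussianBump y α m x).fderiv
  have hinner : HasFDerivAt (fun x : E => innerSL ℝ (x - y)) (innerSL ℝ : E →L[ℝ] E →L[ℝ] ℝ) x :=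
    by simpa only [map_sub] using (innerSL ℝ).hasFDerivAt.sub_const (innerSL ℝ y)
  have hsecond : HasFDerivAt (fun x => gaussianBump y α (-2 * α * m) x • innerSL ℝ (x - y)) _ x :=
    (hasFDerivAt_gaussianBump y α (-2 * α * m) x).smul hinner
  have happly : (innerSL ℝ : E →L[ℝ] E →L[ℝ] ℝ) v w = ⟪v, w⟫ := rfl
  rw [iteratedFDeriv_two_apply, hfderiv, hsecond.fderiv]
  simp only [Matrix.cons_val_zero, Matrix.cons_val_one, add_apply, smul_apply,
    ContinuousLinearMap.smulRight_apply, innerSL_apply_apply, happly, smul_eq_mul, gaussianBump]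
  ring

end GaussianBump

lemma hess_gaussianBump {n : ℕ} (y : En n) (α m : ℝ) (x : En n) (i j : Fin n) :
    hess (gaussianBump y α m) x i j = gaussianBump y α m x *
      (4 * α ^ 2 * ((x - y) i * (x - y) j) - if i = j then 2 * α else 0) := by
  rw [hess, Matrix.of_apply, iteratedFDeriv_two_gaussianBump]
  by_cases hij : i = j
  · subst hij; simp [EuclideanSpace.inner_single_right]
  · simp [EuclideanSpace.inner_single_right, hij, Ne.symm hij]

lemma linOp_gaussianBump {n : ℕ} (a : En n → Matrix (Fin n) (Fin n) ℝ) (b : En n → En n)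
    (c : En n → ℝ) (y : En n) (α m s : ℝ) (x : En n) :
    linOp a b c x s (gradient (gaussianBump y α m) x) (hess (gaussianBump y α m) x) =
      gaussianBump y α m x * (4 * α ^ 2 * ∑ i, ∑ j, a x i j * (x - y) i * (x - y) j -
        2 * α * (∑ i, a x i i + ∑ i, b x i * (x - y) i)) + c x * s := by
  have hsecond : ∀ i j, a x i j * hess (gaussianBump y α m) x i j =
      gaussianBump y α m x * (4 * α ^ 2) * (a x i j * (x - y) i * (x - y) j) -
        if i = j then gaussianBump y α m x * (2 * α) * a x i j else 0 := fun i j => by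
    rw [hess_gaussianBump]
    split_ifs <;> ring
  have hfirst : ∀ i, b x i * gradient (gaussianBump y α m) x i =
      gaussianBump y α m x * (-2 * α) * (b x i * (x - y) i) := fun i => by
    rw [gradient_gaussianBump, PiLp.smul_apply, smul_eq_mul, gaussianBump, gaussianBump]
    ring
  simp only [linOp, hsecond, hfirst, Finset.sum_sub_distrib, Finset.sum_ite_eq, Finset.mem_univ,
    if_true, ← Finset.mul_sum]
  ring

/-- `α` is so large that a Gaussian `exp (-α |x - y|²)` is a strict subsolution on the annulus
`ρ ≤ |x - y| ≤ r`. Relative to the Gaussian, the second order part of the operator contributes at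
least `4α²λρ²`, the trace of `a` and the drift at most `2α(nΛ + nΛr)`, and the potential at most
`Λ`. -/
structure IsBarrierExponent (n : ℕ) (lam Lam ρ r α : ℝ) : Prop where
  pos : 0 < α
  one_le : 1 ≤ 4 * α ^ 2 * (lam * ρ ^ 2) - 2 * α * (n * Lam + n * (Lam * r)) - Lam

lemma exists_isBarrierExponent (n : ℕ) {lam : ℝ} (hlam : 0 < lam) (Lam : ℝ) {ρ : ℝ} (hρ : 0 < ρ)
    (r : ℝ) : ∃ α, IsBarrierExponent n lam Lam ρ r α := by
  have hlinear : Tendsto (fun α => 4 * (lam * ρ ^ 2) * α + -(2 * (n * Lam + n * (Lam * r))))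
      atTop atTop :=
    tendsto_atTop_add_const_right _ _ (tendsto_id.const_mul_atTop (by positivity))
  have hquadratic := tendsto_id.atTop_mul_atTop₀ hlinear
  obtain ⟨α, hα, h⟩ := ((eventually_gt_atTop 0).and
    (hquadratic.eventually_ge_atTop (1 + Lam))).exists
  refine ⟨α, hα, ?_⟩
  simp only [id] at h
  linarith

namespace EllipticCoeffs

variable {n : ℕ} {Ω : Set (En n)} {a : En n → Matrix (Fin n) (Fin n) ℝ} {b : En n → En n}
  {c : En n → ℝ} {lam Lam : ℝ} {x : En n}

lemma trace_le (h : EllipticCoeffs Ω a b c lam Lam) (hx : x ∈ Ω) : ∑ i, a x i i ≤ n * Lam := by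
  have hdiag : ∀ i, a x i i ≤ Lam := fun i => by
    linarith [h.1 x hx i i, le_abs_self (a x i i), abs_nonneg (b x i), abs_nonneg (c x)]
  simpa using Finset.sum_le_sum fun i (_ : i ∈ Finset.univ) => hdiag i

lemma sum_drift_mul_le (h : EllipticCoeffs Ω a b c lam Lam) (hx : x ∈ Ω) (v : En n) :
    ∑ i, b x i * v i ≤ n * (Lam * ‖v‖) := by
  have hcoord : ∀ i, b x i * v i ≤ Lam * ‖v‖ := fun i => by
    have hb : |b x i| ≤ Lam := by
      linarith [h.1 x hx i i, abs_nonneg (a x i i), abs_nonneg (c x)]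
    calc b x i * v i ≤ |b x i| * ‖v i‖ := by
          rw [Real.norm_eq_abs, ← abs_mul]; exact le_abs_self _
      _ ≤ Lam * ‖v‖ := by
          gcongr
          exacts [(abs_nonneg _).trans hb, PiLp.norm_apply_le v i]
  simpa using Finset.sum_le_sum fun i (_ : i ∈ Finset.univ) => hcoord i

lemma abs_potential_le [NeZero n] (h : EllipticCoeffs Ω a b c lam Lam) (hx : x ∈ Ω) :
    |c x| ≤ Lam := by
  linarith [h.1 x hx 0 0, abs_nonneg (a x 0 0), abs_nonneg (b x 0)]

lemma gaussianBump_le_linOp [NeZero n] (h : EllipticCoeffs Ω a b c lam Lam) (hlam : 0 ≤ lam)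
    (hx : x ∈ Ω) {y : En n} {α m s ρ r : ℝ} (hm : 0 < m) (hρ : 0 ≤ ρ)
    (hα : IsBarrierExponent n lam Lam ρ r α)
    (hρx : ρ ≤ ‖x - y‖) (hxr : ‖x - y‖ ≤ r) (hs : 0 ≤ s) (hsx : s ≤ gaussianBump y α m x) :
    gaussianBump y α m x ≤
      linOp a b c x s (gradient (gaussianBump y α m) x) (hess (gaussianBump y α m) x) := by
  have hαpos : 0 < α := hα.pos
  have hLam : 0 ≤ Lam := (abs_nonneg _).trans (h.abs_potential_le hx)
  set G := gaussianBump y α m x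
  have hG : 0 ≤ G := (gaussianBump_pos y α hm x).le
  have hsecond : lam * ρ ^ 2 ≤ ∑ i, ∑ j, a x i j * (x - y) i * (x - y) j :=
    le_trans (by gcongr) (h.2 x hx (x - y))
  have hfirst : ∑ i, b x i * (x - y) i ≤ n * (Lam * r) :=
    (h.sum_drift_mul_le hx (x - y)).trans (by gcongr)
  have hzeroth : -(G * Lam) ≤ c x * s := by
    have : |c x * s| ≤ Lam * G := by
      rw [abs_mul, abs_of_nonneg hs]
      exact mul_le_mul (h.abs_potential_le hx) hsx hs hLam
    linarith [neg_abs_le (c x * s)]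
  rw [linOp_gaussianBump]
  calc G = G * 1 := (mul_one G).symm
    _ ≤ G * (4 * α ^ 2 * (lam * ρ ^ 2) - 2 * α * (n * Lam + n * (Lam * r)) - Lam) := by
        gcongr; exact hα.one_le
    _ = G * (4 * α ^ 2 * (lam * ρ ^ 2) - 2 * α * (n * Lam + n * (Lam * r))) + -(G * Lam) := by ring
    _ ≤ _ := by
        gcongr
        exact h.trace_le hx

end EllipticCoeffs

lemma mul_sub_le_exp_neg_sq_sub {α r d : ℝ} (hα : 0 ≤ α) (hd : 0 ≤ d) (hdr : d ≤ r) :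
    Real.exp (-α * r ^ 2) * α * r * (r - d) ≤
      Real.exp (-α * d ^ 2) - Real.exp (-α * r ^ 2) := by
  have hsq : r * (r - d) ≤ r ^ 2 - d ^ 2 := by nlinarith
  have hfactor : Real.exp (-α * d ^ 2) =
      Real.exp (-α * r ^ 2) * Real.exp (α * (r ^ 2 - d ^ 2)) := by
    rw [← Real.exp_add]; ring_nf
  calc Real.exp (-α * r ^ 2) * α * r * (r - d)
      = Real.exp (-α * r ^ 2) * (α * (r * (r - d))) := by ring
    _ ≤ Real.exp (-α * r ^ 2) * (Real.exp (α * (r ^ 2 - d ^ 2)) - 1) := by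
        gcongr
        linarith [mul_le_mul_of_nonneg_left hsq hα, Real.add_one_le_exp (α * (r ^ 2 - d ^ 2))]
    _ = Real.exp (-α * d ^ 2) - Real.exp (-α * r ^ 2) := by rw [hfactor]; ring

section Supersolutions

variable {n : ℕ} {Ω : Set (En n)} {lam Lam : ℝ} {u : En n → ℝ}

lemma hess_add_const (φ : En n → ℝ) (k : ℝ) (x : En n) : hess (fun y => φ y + k) x = hess φ x := by
  have hfderiv : fderiv ℝ (fun y => φ y + k) = fderiv ℝ φ := funext fun _ => fderiv_add_const k
  ext i j
  simp only [hess, Matrix.of_apply, iteratedFDeriv_two_apply, hfderiv]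

lemma IsViscositySupersolution.apply_le_of_isLocalMinOn
    {F : En n → ℝ → En n → Matrix (Fin n) (Fin n) ℝ → ℝ} {f : En n → ℝ} {O : Set (En n)}
    (h : IsViscositySupersolution F f O u) {φ : En n → ℝ} (hφ : ContDiffOn ℝ 2 φ O) {x : En n}
    (hx : x ∈ O) (hmin : IsLocalMinOn (fun y => u y - φ y) O x) :
    F x (u x) (gradient φ x) (hess φ x) ≤ f x := by
  have hgrad : gradient (fun y => φ y + (u x - φ x)) x = gradient φ x := by
    rw [gradient, gradient, fderiv_add_const]
  have hmin' : IsLocalMinOn (fun y => u y - (φ y + (u x - φ x))) O x := by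
    filter_upwards [hmin] with y hy
    linarith
  have := h (fun y => φ y + (u x - φ x)) (hφ.add contDiffOn_const) x hx (by ring) hmin'
  rwa [hgrad, hess_add_const, add_sub_cancel] at this

/-- `u` is a nonnegative lower semicontinuous supersolution of `Lu ≤ ε` in `Ω` for some operator
`L` with ellipticity constants `lam`, `Lam`. The operator is quantified away so that constants
obtained for this class are uniform in the coefficients. -/
def IsNonnegSupersolution (Ω : Set (En n)) (lam Lam ε : ℝ) (u : En n → ℝ) : Prop :=
  ∃ (a : En n → Matrix (Fin n) (Fin n) ℝ) (b : En n → En n) (c : En n → ℝ),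
    EllipticCoeffs Ω a b c lam Lam ∧ LowerSemicontinuousOn u Ω ∧
    IsViscositySupersolution (linOp a b c) (fun _ => ε) Ω u ∧ ∀ x ∈ Ω, 0 ≤ u x

namespace IsNonnegSupersolution

variable {ε : ℝ}

lemma nonneg (h : IsNonnegSupersolution Ω lam Lam ε u) {x : En n} (hx : x ∈ Ω) : 0 ≤ u x := by
  obtain ⟨_, _, _, _, _, _, hnonneg⟩ := h
  exact hnonneg x hx

lemma lowerSemicontinuousOn (h : IsNonnegSupersolution Ω lam Lam ε u) :
    LowerSemicontinuousOn u Ω := by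
  obtain ⟨_, _, _, _, hlsc, _⟩ := h
  exact hlsc

lemma mono (h : IsNonnegSupersolution Ω lam Lam ε u) {ε' : ℝ} (hε : ε ≤ ε') :
    IsNonnegSupersolution Ω lam Lam ε' u := by
  obtain ⟨a, b, c, hcoeff, hlsc, hsuper, hnonneg⟩ := h
  exact ⟨a, b, c, hcoeff, hlsc,
    fun φ hφ x hx heq hmin => (hsuper φ hφ x hx heq hmin).trans hε, hnonneg⟩

lemma gaussianBump_le_of_isLocalMin [NeZero n] (h : IsNonnegSupersolution Ω lam Lam ε u)
    (hlam : 0 ≤ lam) {x y : En n} {α m ρ r : ℝ} (hm : 0 < m) (hρ : 0 ≤ ρ)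
    (hα : IsBarrierExponent n lam Lam ρ r α)
    (hx : x ∈ Ω) (hρx : ρ ≤ ‖x - y‖) (hxr : ‖x - y‖ ≤ r) (hux : u x ≤ gaussianBump y α m x)
    (hmin : IsLocalMin (fun z => u z - gaussianBump y α m z) x) :
    gaussianBump y α m x ≤ ε := by
  obtain ⟨a, b, c, hcoeff, -, hsuper, hnonneg⟩ := h
  exact (hcoeff.gaussianBump_le_linOp hlam hx hm hρ hα hρx hxr (hnonneg x hx) hux).trans
    (hsuper.apply_le_of_isLocalMinOn (contDiff_gaussianBump y α m).contDiffOn hx (hmin.on Ω))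

lemma gaussianBump_sub_le_on_closedBall [NeZero n] (h : IsNonnegSupersolution Ω lam Lam ε u)
    (hlam : 0 ≤ lam) {y : En n} {α m ρ r s : ℝ} (hm : 0 < m) (hρ : 0 ≤ ρ)
    (hα : IsBarrierExponent n lam Lam ρ r α)
    (hsr : s ≤ r) (hs : closedBall y s ⊆ Ω) (hε : ε < m * Real.exp (-α * s ^ 2))
    (hcore : ∀ x ∈ ball y ρ, m ≤ u x) {x : En n} (hx : x ∈ closedBall y s) :
    gaussianBump y α m x - m * Real.exp (-α * s ^ 2) ≤ u x := by
  set w := gaussianBump y α m with hw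
  have hwcont : Continuous w := (contDiff_gaussianBump (k := 0) y α m).continuous
  have hlsc : LowerSemicontinuousOn (fun z => u z - w z) (closedBall y s) := by
    simpa only [sub_eq_add_neg, Pi.neg_apply] using (h.lowerSemicontinuousOn.mono hs).add
      (hwcont.neg.lowerSemicontinuous.lowerSemicontinuousOn _)
  obtain ⟨q, hq, hmin⟩ := hlsc.exists_isMinOn ⟨x, hx⟩ (isCompact_closedBall y s)
  suffices -(m * Real.exp (-α * s ^ 2)) ≤ u q - w q by
    linarith [show u q - w q ≤ u x - w x from hmin hx]
  by_contra! hlt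
  have huq : 0 ≤ u q := h.nonneg (hs hq)
  have hqs : ‖q - y‖ ≤ s := mem_closedBall_iff_norm.1 hq
  have hboundary : ‖q - y‖ ≠ s := fun heq => by
    have : w q = m * Real.exp (-α * s ^ 2) := by rw [hw, gaussianBump, heq]
    linarith
  have hexp : 0 < m * Real.exp (-α * s ^ 2) := by positivity
  have hoff_core : ρ ≤ ‖q - y‖ := by
    by_contra! hin
    linarith [hcore q (mem_ball_iff_norm.2 hin), gaussianBump_le y hα.pos.le hm.le q]
  have hlocal : IsLocalMin (fun z => u z - w z) q :=
    hmin.isLocalMin <| mem_of_superset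
      (isOpen_ball.mem_nhds (mem_ball_iff_norm.2 (hqs.lt_of_ne hboundary))) ball_subset_closedBall
  have hwε : w q ≤ ε := h.gaussianBump_le_of_isLocalMin hlam hm hρ hα (hs hq) hoff_core
    (hqs.trans hsr) (by linarith) hlocal
  have hwq : m * Real.exp (-α * s ^ 2) ≤ w q := by
    have := hα.pos
    simp only [hw, gaussianBump, neg_mul]
    gcongr
  exact (hε.trans_le hwq).not_ge hwε

lemma gaussianBump_sub_le_on_ball [NeZero n] (h : IsNonnegSupersolution Ω lam Lam ε u)
    (hlam : 0 ≤ lam) {y : En n} {α m ρ r : ℝ} (hm : 0 < m) (hρ : 0 ≤ ρ)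
    (hα : IsBarrierExponent n lam Lam ρ r α)
    (hr : ball y r ⊆ Ω) (hε : ε < m * Real.exp (-α * r ^ 2))
    (hcore : ∀ x ∈ ball y ρ, m ≤ u x) {x : En n} (hx : x ∈ ball y r) :
    gaussianBump y α m x - m * Real.exp (-α * r ^ 2) ≤ u x := by
  have hcont : Continuous fun s : ℝ => gaussianBump y α m x - m * Real.exp (-α * s ^ 2) := by
    fun_prop
  refine le_of_tendsto ((hcont.tendsto r).mono_left nhdsWithin_le_nhds : Tendsto _ (𝓝[<] r) _) ?_
  filter_upwards [Ioo_mem_nhdsLT (mem_ball.1 hx)] with s ⟨hxs, hsr⟩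
  have hs : 0 ≤ s := dist_nonneg.trans hxs.le
  refine h.gaussianBump_sub_le_on_closedBall hlam hm hρ hα hsr.le
    ((closedBall_subset_ball hsr).trans hr) (hε.trans_le ?_) hcore hxs.le
  have := hα.pos
  simp only [neg_mul]
  gcongr

end IsNonnegSupersolution

theorem exists_mul_sub_dist_le_of_ball_subset [NeZero n] (hlam : 0 < lam) (Lam : ℝ) {ρ r : ℝ}
    (hρ : 0 < ρ) (hr : 0 < r) :
    ∃ ε > 0, ∃ μ > 0, ∀ (Ω : Set (En n)) (y : En n), ball y r ⊆ Ω → ∀ m > 0, ∀ u,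
      IsNonnegSupersolution Ω lam Lam (m * ε) u → (∀ x ∈ ball y ρ, m ≤ u x) →
      ∀ x ∈ Ω, m * μ * (r - dist x y) ≤ u x := by
  obtain ⟨α, hα⟩ := exists_isBarrierExponent n hlam Lam hρ r
  have hαpos := hα.pos
  have hexp := Real.exp_pos (-α * r ^ 2)
  refine ⟨Real.exp (-α * r ^ 2) / 2, by positivity, Real.exp (-α * r ^ 2) * α * r, by positivity,
    fun Ω y hy m hm u hu hcore x hx => ?_⟩
  rcases le_or_gt r (dist x y) with hout | hin
  · exact (mul_nonpos_of_nonneg_of_nonpos (by positivity) (sub_nonpos.2 hout)).trans (hu.nonneg hx)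
  calc m * (Real.exp (-α * r ^ 2) * α * r) * (r - dist x y)
      = m * (Real.exp (-α * r ^ 2) * α * r * (r - dist x y)) := by ring
    _ ≤ m * (Real.exp (-α * dist x y ^ 2) - Real.exp (-α * r ^ 2)) := by
        gcongr
        exact mul_sub_le_exp_neg_sq_sub hαpos.le dist_nonneg hin.le
    _ = gaussianBump y α m x - m * Real.exp (-α * r ^ 2) := by
        rw [gaussianBump, dist_eq_norm, mul_sub]
    _ ≤ u x := hu.gaussianBump_sub_le_on_ball hlam.le hm hρ.le hα hy
        (by gcongr; exact half_lt_self hexp) hcore hin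

end Supersolutions

section Propagation

variable {n : ℕ} {Ω : Set (En n)} {lam Lam δ : ℝ}

/-- Uniformly over the pairs `(x, y) ∈ S`, a lower bound `m` on `ball x δ` for a supersolution
propagates to the lower bound `m * μ` at `y`. The right-hand side `m * ε` scales with `m`, which
makes such estimates composable. -/
def PropagatesPositivity (Ω : Set (En n)) (lam Lam δ : ℝ) (S : Set (En n × En n)) : Prop :=
  ∃ ε > 0, ∃ μ > 0, ∀ p ∈ S, ∀ m > 0, ∀ u, IsNonnegSupersolution Ω lam Lam (m * ε) u →
    (∀ x ∈ ball p.1 δ, m ≤ u x) → m * μ ≤ u p.2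

namespace PropagatesPositivity

lemma empty : PropagatesPositivity Ω lam Lam δ ∅ :=
  ⟨1, one_pos, 1, one_pos, fun _ hp => hp.elim⟩

lemma self_ball (x : En n) : PropagatesPositivity Ω lam Lam δ ({x} ×ˢ ball x δ) := by
  refine ⟨1, one_pos, 1, one_pos, ?_⟩
  rintro ⟨_, y⟩ ⟨rfl, hy⟩ m - u - hball
  simpa only [mul_one] using hball y hy

lemma mono {S T : Set (En n × En n)} (h : PropagatesPositivity Ω lam Lam δ T) (hST : S ⊆ T) :
    PropagatesPositivity Ω lam Lam δ S := by
  obtain ⟨ε, hε, μ, hμ, hbound⟩ := h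
  exact ⟨ε, hε, μ, hμ, fun p hp => hbound p (hST hp)⟩

lemma union {S T : Set (En n × En n)} (hS : PropagatesPositivity Ω lam Lam δ S)
    (hT : PropagatesPositivity Ω lam Lam δ T) : PropagatesPositivity Ω lam Lam δ (S ∪ T) := by
  obtain ⟨ε₁, hε₁, μ₁, hμ₁, hbound₁⟩ := hS
  obtain ⟨ε₂, hε₂, μ₂, hμ₂, hbound₂⟩ := hT
  refine ⟨min ε₁ ε₂, lt_min hε₁ hε₂, min μ₁ μ₂, lt_min hμ₁ hμ₂, ?_⟩
  rintro p (hp | hp) m hm u hu hball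
  · calc m * min μ₁ μ₂ ≤ m * μ₁ := by gcongr; exact min_le_left _ _
      _ ≤ u p.2 := hbound₁ p hp m hm u (hu.mono (by gcongr; exact min_le_left _ _)) hball
  · calc m * min μ₁ μ₂ ≤ m * μ₂ := by gcongr; exact min_le_right _ _
      _ ≤ u p.2 := hbound₂ p hp m hm u (hu.mono (by gcongr; exact min_le_right _ _)) hball

lemma ball_prod {x : En n} {δ' : ℝ} {V : Set (En n)}
    (h : PropagatesPositivity Ω lam Lam δ ({x} ×ˢ V)) :
    PropagatesPositivity Ω lam Lam (δ + δ') (ball x δ' ×ˢ V) := by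
  obtain ⟨ε, hε, μ, hμ, hbound⟩ := h
  refine ⟨ε, hε, μ, hμ, ?_⟩
  rintro ⟨x', y⟩ ⟨hx', hy⟩ m hm u hu hball
  have hsub : ball x δ ⊆ ball x' (δ + δ') := ball_subset_ball' (by
    linarith [mem_ball'.1 hx'])
  exact hbound (x, y) ⟨rfl, hy⟩ m hm u hu fun z hz => hball z (hsub hz)

lemma enlarge_ball [NeZero n] (hlam : 0 < lam) {x y : En n} {ρ s r : ℝ} (hρ : 0 < ρ) (hr : 0 < r)
    (hsr : s < r) (hy : ball y r ⊆ Ω)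
    (h : PropagatesPositivity Ω lam Lam δ ({x} ×ˢ ball y ρ)) :
    PropagatesPositivity Ω lam Lam δ ({x} ×ˢ ball y s) := by
  obtain ⟨ε₁, hε₁, μ₁, hμ₁, hbound⟩ := h
  obtain ⟨ε₂, hε₂, μ₂, hμ₂, hhopf⟩ := exists_mul_sub_dist_le_of_ball_subset (n := n) hlam Lam hρ hr
  refine ⟨min ε₁ (μ₁ * ε₂), by positivity, μ₁ * (μ₂ * (r - s)),
    by have := sub_pos.2 hsr; positivity, ?_⟩
  rintro ⟨_, z⟩ ⟨rfl, hz⟩ m hm u hu hball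
  have hcore : ∀ w ∈ ball y ρ, m * μ₁ ≤ u w := fun w hw =>
    hbound (_, w) ⟨rfl, hw⟩ m hm u (hu.mono (by gcongr; exact min_le_left _ _)) hball
  have hu₂ : IsNonnegSupersolution Ω lam Lam (m * μ₁ * ε₂) u := hu.mono (by
    rw [mul_assoc]; gcongr; exact min_le_right _ _)
  calc m * (μ₁ * (μ₂ * (r - s))) = m * μ₁ * μ₂ * (r - s) := by ring
    _ ≤ m * μ₁ * μ₂ * (r - dist z y) := by gcongr; exact (mem_ball.1 hz).le
    _ ≤ u z := hhopf Ω y hy (m * μ₁) (by positivity) u hu₂ hcore z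
        (hy (ball_subset_ball hsr.le hz))

end PropagatesPositivity

lemma exists_propagatesPositivity_ball [NeZero n] (hlam : 0 < lam) (hΩ : IsOpen Ω)
    (hconn : IsPreconnected Ω) (hδ : 0 < δ) {x y : En n} (hx : x ∈ Ω) (hy : y ∈ Ω) :
    ∃ ρ > 0, PropagatesPositivity Ω lam Lam δ ({x} ×ˢ ball y ρ) := by
  set T : Set (En n) := {y | ∃ ρ > 0, PropagatesPositivity Ω lam Lam δ ({x} ×ˢ ball y ρ)}
  have hopen : IsOpen T := Metric.isOpen_iff.2 fun y ⟨ρ, hρ, h⟩ => ⟨ρ, hρ, fun z hz => by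
    obtain ⟨ρ', hρ', hsub⟩ := exists_ball_subset_ball hz
    exact ⟨ρ', hρ', h.mono (prod_mono_right hsub)⟩⟩
  have hclosed : closure T ∩ Ω ⊆ T := by
    rintro y ⟨hyT, hyΩ⟩
    obtain ⟨R, hR, hyR⟩ := Metric.isOpen_iff.1 hΩ y hyΩ
    obtain ⟨y', ⟨ρ, hρ, h⟩, hyy'⟩ := Metric.mem_closure_iff.1 hyT (R / 4) (by positivity)
    have hy'R : ball y' (R / 2) ⊆ Ω := (ball_subset_ball' (by
      rw [dist_comm]; linarith)).trans hyR
    have hnear : ball y (R / 8) ⊆ ball y' (3 * R / 8) := ball_subset_ball' (by linarith)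
    exact ⟨R / 8, by positivity, (h.enlarge_ball hlam hρ (half_pos hR) (by linarith) hy'R).mono
      (prod_mono_right hnear)⟩
  exact hconn.subset_of_closure_inter_subset hopen
    ⟨x, hx, δ, hδ, PropagatesPositivity.self_ball x⟩ hclosed hy

theorem propagatesPositivity_of_isCompact [NeZero n] (hlam : 0 < lam) (hΩ : IsOpen Ω)
    (hconn : IsPreconnected Ω) (hδ : 0 < δ) {S : Set (En n × En n)} (hS : IsCompact S)
    (hSΩ : S ⊆ Ω ×ˢ Ω) : PropagatesPositivity Ω lam Lam δ S := by
  refine hS.induction_on .empty (fun _ _ hST h => h.mono hST) (fun _ _ => .union) ?_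
  rintro ⟨x, y⟩ hxy
  obtain ⟨hx, hy⟩ := hSΩ hxy
  obtain ⟨ρ, hρ, h⟩ := exists_propagatesPositivity_ball (Lam := Lam) hlam hΩ hconn (half_pos hδ)
    hx hy
  refine ⟨ball x (δ / 2) ×ˢ ball y ρ, mem_nhdsWithin_of_mem_nhds
    (prod_mem_nhds (ball_mem_nhds x (half_pos hδ)) (ball_mem_nhds y hρ)), ?_⟩
  simpa only [add_halves] using h.ball_prod (δ' := δ / 2)

end Propagation

section InteriorBalls

/-- A uniform interior ball condition: every `x ∈ Ω` lies in the closure of a ball of radius `r`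
contained in `Ω`, at depth at least `min r (dist x ∂Ω)`. For `x` close to `∂Ω`, such a ball touches
`∂Ω` at the point nearest to `x`. -/
def HasInteriorBalls {X : Type*} [PseudoMetricSpace X] (Ω : Set X) (r : ℝ) : Prop :=
  ∀ x ∈ Ω, ∃ y, ball y r ⊆ Ω ∧ min r (infDist x (frontier Ω)) ≤ r - dist x y

lemma isCompact_setOf_ball_subset {X : Type*} [PseudoMetricSpace X] [ProperSpace X] {Ω : Set X}
    (hΩ : Bornology.IsBounded Ω) {r : ℝ} (hr : 0 < r) : IsCompact {y | ball y r ⊆ Ω} := by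
  have hcompl : {y | ball y r ⊆ Ω} = (thickening r Ωᶜ)ᶜ := by
    ext y
    simp only [mem_ofPred_eq, mem_compl_iff, mem_thickening_iff, not_exists, not_and, subset_def,
      mem_ball, dist_comm y]
    exact forall_congr' fun z => not_imp_not.symm.trans (by tauto)
  refine isCompact_of_isClosed_isBounded ?_ (hΩ.subset fun y hy => hy (mem_ball_self hr))
  rw [hcompl]
  exact isOpen_thickening.isClosed_compl

lemma infDist_frontier_le_diam {X : Type*} [PseudoMetricSpace X] {Ω : Set X}
    (hΩ : Bornology.IsBounded Ω) {x : X} (hx : x ∈ Ω) : infDist x (frontier Ω) ≤ diam Ω := by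
  rcases (frontier Ω).eq_empty_or_nonempty with hempty | ⟨z, hz⟩
  · rw [hempty, infDist_empty]
    exact diam_nonneg
  · rw [← diam_closure]
    exact (infDist_le_dist_of_mem hz).trans <| dist_le_diam_of_mem hΩ.closure (subset_closure hx)
      (frontier_subset_closure hz)

lemma exists_mul_le_min_infDist {X : Type*} [PseudoMetricSpace X] {Ω : Set X}
    (hΩ : Bornology.IsBounded Ω) {r : ℝ} (hr : 0 < r) :
    ∃ κ > 0, ∀ x ∈ Ω, κ * infDist x (frontier Ω) ≤ min r (infDist x (frontier Ω)) := by
  have hD : 0 < diam Ω + 1 := by linarith [diam_nonneg (s := Ω)]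
  refine ⟨min 1 (r / (diam Ω + 1)), by positivity, fun x hx => le_min ?_ ?_⟩
  · calc min 1 (r / (diam Ω + 1)) * infDist x (frontier Ω)
        ≤ r / (diam Ω + 1) * (diam Ω + 1) := by
          gcongr
          · exact infDist_nonneg
          · exact min_le_right _ _
          · linarith [infDist_frontier_le_diam hΩ hx]
      _ = r := div_mul_cancel₀ _ hD.ne'
  · exact mul_le_of_le_one_left infDist_nonneg (min_le_left _ _)

lemma ball_infDist_frontier_subset {E : Type*} [SeminormedAddCommGroup E] [NormedSpace ℝ E]
    {Ω : Set E} (hΩ : IsOpen Ω) {x : E} (hx : x ∈ Ω) : ball x (infDist x (frontier Ω)) ⊆ Ω := by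
  rcases le_or_gt (infDist x (frontier Ω)) 0 with hd | hd
  · rw [ball_eq_empty.2 hd]
    exact empty_subset Ω
  refine (convex_ball x _).isPreconnected.subset_of_closure_inter_subset hΩ
    ⟨x, mem_ball_self hd, hx⟩ ?_
  rintro y ⟨hyΩ, hyball⟩
  by_contra hy
  have hyf : y ∈ frontier Ω := ⟨hyΩ, by rwa [hΩ.interior_eq]⟩
  exact (infDist_le_dist_of_mem hyf).not_gt (mem_ball'.1 hyball)

end InteriorBalls

section TangentBalls

open NormedSpace

variable {E : Type*} [NormedAddCommGroup E] [InnerProductSpace ℝ E]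

lemma norm_sub_sq_lt_of_mem_ball_sub_smul {y z ν : E} {r : ℝ} (hν : ‖ν‖ = 1)
    (hy : y ∈ ball (z - r • ν) r) : ‖y - z‖ ^ 2 < 2 * r * -⟪ν, y - z⟫ := by
  have hlt : ‖y - z + r • ν‖ < r := by
    rwa [mem_ball, dist_eq_norm, sub_sub_eq_add_sub, add_sub_right_comm] at hy
  have hsq : ‖y - z + r • ν‖ ^ 2 < r ^ 2 := by gcongr
  rw [norm_add_sq_real, real_inner_smul_right, norm_smul, hν, mul_one, Real.norm_eq_abs, sq_abs,
    real_inner_comm] at hsq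
  linarith

variable [CompleteSpace E] {f : E → ℝ}

lemma sub_eq_norm_smul_normalize_gradient {x z : E} (hf : DifferentiableAt ℝ f z)
    (hgrad : gradient f z ≠ 0) (hmax : IsLocalMaxOn f (closedBall x (dist z x)) z) :
    z - x = ‖z - x‖ • normalize (gradient f z) := by
  set ν := normalize (gradient f z)
  have hν : ‖ν‖ = 1 := norm_normalize hgrad
  have htop : x + ‖z - x‖ • ν ∈ closedBall x (dist z x) := by
    rw [mem_closedBall, dist_self_add_left, norm_smul, hν, mul_one, norm_norm, dist_eq_norm]
  have htangent : x + ‖z - x‖ • ν - z ∈ posTangentConeAt (closedBall x (dist z x)) z :=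
    sub_mem_posTangentConeAt_of_segment_subset <|
      (convex_closedBall x _).segment_subset (mem_closedBall.2 le_rfl) htop
  have hnonpos : ‖gradient f z‖ * ⟪ν, x + ‖z - x‖ • ν - z⟫ ≤ 0 := by
    rw [← real_inner_smul_left, norm_smul_normalize, inner_gradient_left]
    exact hmax.hasFDerivWithinAt_nonpos hf.hasFDerivAt.hasFDerivWithinAt htangent
  have hle : ‖z - x‖ ≤ ⟪ν, z - x⟫ := by
    have h := nonpos_of_mul_nonpos_right hnonpos (norm_pos_iff.2 hgrad)
    rw [add_sub_right_comm, inner_add_right, real_inner_smul_right, real_inner_self_eq_norm_sq, hν,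
      ← neg_sub z x, inner_neg_right] at h
    linarith
  have heq : ⟪ν, z - x⟫ = ‖ν‖ * ‖z - x‖ :=
    (real_inner_le_norm _ _).antisymm (by rwa [hν, one_mul])
  rw [inner_eq_norm_mul_iff_real.1 heq, hν, one_smul]

lemma le_add_inner_gradient_add_mul_sq {z y : E} {R : ℝ} {M : NNReal}
    (hf : DifferentiableOn ℝ f (ball z R)) (hlip : LipschitzOnWith M (fderiv ℝ f) (ball z R))
    (hy : y ∈ ball z R) : f y ≤ f z + ⟪gradient f z, y - z⟫ + M * ‖y - z‖ ^ 2 := by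
  have hsub : closedBall z (dist y z) ⊆ ball z R := closedBall_subset_ball hy
  have hz : z ∈ closedBall z (dist y z) := mem_closedBall_self dist_nonneg
  have hfderiv : ∀ w ∈ closedBall z (dist y z), ‖fderiv ℝ f w - fderiv ℝ f z‖ ≤ M * dist y z := by
    intro w hw
    rw [← dist_eq_norm]
    exact (hlip.dist_le_mul w (hsub hw) z (hsub hz)).trans (by gcongr; exact hw)
  have htaylor := (convex_closedBall z (dist y z)).norm_image_sub_le_of_norm_fderiv_le' (𝕜 := ℝ)
    (fun w hw => hf.differentiableAt (isOpen_ball.mem_nhds (hsub hw))) hfderiv hz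
    (mem_closedBall.2 le_rfl)
  rw [← inner_gradient_left, dist_eq_norm, mul_assoc, ← sq] at htaylor
  linarith [(Real.le_norm_self _).trans htaylor]

lemma neg_of_mem_ball_sub_smul_normalize_gradient {z y : E} {r : ℝ} {M : NNReal}
    (hf : DifferentiableOn ℝ f (ball z (2 * r)))
    (hlip : LipschitzOnWith M (fderiv ℝ f) (ball z (2 * r))) (hz : f z ≤ 0)
    (hM : 2 * r * M < ‖gradient f z‖)
    (hy : y ∈ ball (z - r • normalize (gradient f z)) r) : f y < 0 := by
  have hr : 0 < r := pos_of_mem_ball hy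
  have hν : ‖normalize (gradient f z)‖ = 1 :=
    norm_normalize (norm_pos_iff.1 (lt_of_le_of_lt (by positivity) hM))
  have hyz : y ∈ ball z (2 * r) := ball_subset_ball' (by
    rw [dist_self_sub_left, norm_smul, hν, Real.norm_of_nonneg hr.le]; linarith) hy
  have htaylor := le_add_inner_gradient_add_mul_sq hf hlip hyz
  have hsq := norm_sub_sq_lt_of_mem_ball_sub_smul hν hy
  rw [← norm_smul_normalize (gradient f z), real_inner_smul_left] at htaylor
  set I := -⟪normalize (gradient f z), y - z⟫ with hI
  have hIpos : 0 < I := pos_of_mul_pos_right ((sq_nonneg _).trans_lt hsq) (by positivity)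
  calc f y ≤ M * ‖y - z‖ ^ 2 - ‖gradient f z‖ * I := by rw [hI]; linarith
    _ ≤ M * (2 * r * I) - ‖gradient f z‖ * I := by gcongr
    _ = (2 * r * M - ‖gradient f z‖) * I := by ring
    _ < 0 := mul_neg_of_neg_of_pos (sub_neg.2 hM) hIpos

lemma eventually_neg_on_ball_sub_smul_normalize_gradient {z₀ : E} (hf : ContDiffAt ℝ 2 f z₀)
    (hgrad : gradient f z₀ ≠ 0) : ∀ᶠ R in 𝓝[>] (0 : ℝ), ∀ z ∈ ball z₀ R, f z ≤ 0 →
      ∀ y ∈ ball (z - R • normalize (gradient f z)) R, f y < 0 := by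
  have hnear : ∀ᶠ w in 𝓝 z₀, DifferentiableAt ℝ f w :=
    (hf.eventually (by simp)).mono fun w hw => hw.differentiableAt two_ne_zero
  obtain ⟨M, t, ht, hlip⟩ :=
    (hf.fderiv_right (m := 1) (by norm_num)).exists_lipschitzOnWith
  obtain ⟨s, hs, hst⟩ := Metric.mem_nhds_iff.1 (inter_mem ht hnear)
  have hsmall : ∀ᶠ R in 𝓝[>] (0 : ℝ), 3 * R < s ∧ 3 * R * M < ‖gradient f z₀‖ := by
    refine nhdsWithin_le_nhds (Filter.Eventually.and ?_ ?_)
    · exact ContinuousAt.eventually_lt (by fun_prop) continuousAt_const (by simpa using hs)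
    · exact ContinuousAt.eventually_lt (by fun_prop) continuousAt_const (by simpa using hgrad)
  filter_upwards [hsmall, self_mem_nhdsWithin] with R ⟨hRs, hRM⟩ (hR : 0 < R) z hz hfz y hy
  have hsub : ball z (2 * R) ⊆ t ∩ {w | DifferentiableAt ℝ f w} := (ball_subset_ball' (by
    linarith [mem_ball.1 hz])).trans hst
  have hgradz : 2 * R * M < ‖gradient f z‖ := by
    have hdist : ‖gradient f z₀ - gradient f z‖ ≤ M * R := by
      rw [gradient, gradient, ← map_sub, LinearIsometryEquiv.norm_map, ← dist_eq_norm]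
      refine (hlip.dist_le_mul z₀ (hst (mem_ball_self hs)).1 z
        (hsub (mem_ball_self (by positivity))).1).trans ?_
      gcongr
      exact (mem_ball'.1 hz).le
    linarith [norm_sub_norm_le (gradient f z₀) (gradient f z)]
  exact neg_of_mem_ball_sub_smul_normalize_gradient
    (fun w hw => DifferentiableAt.differentiableWithinAt (hsub hw).2)
    (hlip.mono (hsub.trans inter_subset_left)) hfz hgradz hy

end TangentBalls

section InwardNormals

variable {E : Type*} [NormedAddCommGroup E] [InnerProductSpace ℝ E]

/-- `ν` is an inward unit normal to `Ω` at the boundary point `z` whose tangent ball of radius `R`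
lies in `Ω`. Every ball in `Ω` touching `∂Ω` at `z` has its center on the inward normal ray, so in
particular this ray contains the points of `Ω` for which `z` is a nearest boundary point. -/
structure IsInwardNormal (Ω : Set E) (R : ℝ) (z ν : E) : Prop where
  norm_eq_one : ‖ν‖ = 1
  ball_subset : ball (z + R • ν) R ⊆ Ω
  eq_add_smul : ∀ x, ball x (dist x z) ⊆ Ω → x = z + dist x z • ν

lemma IsInwardNormal.mono {Ω : Set E} {r R : ℝ} {z ν : E} (h : IsInwardNormal Ω R z ν)
    (hrR : r ≤ R) : IsInwardNormal Ω r z ν := by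
  refine ⟨h.norm_eq_one, (ball_subset_ball' ?_).trans h.ball_subset, h.eq_add_smul⟩
  rw [dist_add_left, dist_eq_norm, ← sub_smul, norm_smul, h.norm_eq_one, mul_one,
    Real.norm_of_nonpos (by linarith)]
  linarith

lemma IsInwardNormal.dist_add_smul {Ω : Set E} {R : ℝ} {x z ν : E} (h : IsInwardNormal Ω R z ν)
    (hx : ball x (dist x z) ⊆ Ω) (hxR : dist x z ≤ R) :
    dist x (z + R • ν) = R - dist x z := by
  conv_lhs => rw [h.eq_add_smul x hx]
  rw [dist_add_left, dist_eq_norm, ← sub_smul, norm_smul, h.norm_eq_one, mul_one,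
    Real.norm_of_nonpos (by linarith), neg_sub]

lemma eq_add_smul_neg_normalize_gradient [CompleteSpace E] {Ω U : Set E} {f : E → ℝ} {x z : E}
    (hU : U ∈ 𝓝 z) (hfU : ∀ w ∈ closure Ω ∩ U, f w ≤ f z) (hf : DifferentiableAt ℝ f z)
    (hgrad : gradient f z ≠ 0) (hx : ball x (dist x z) ⊆ Ω) :
    x = z + dist x z • -NormedSpace.normalize (gradient f z) := by
  rcases eq_or_ne x z with rfl | hxz
  · rw [dist_self, zero_smul, add_zero]
  have hclosure : closedBall x (dist z x) ⊆ closure Ω := by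
    rw [dist_comm, ← closure_ball x (dist_ne_zero.2 hxz)]
    exact closure_mono hx
  have hmax : IsLocalMaxOn f (closedBall x (dist z x)) z := by
    filter_upwards [self_mem_nhdsWithin, mem_nhdsWithin_of_mem_nhds hU] with w hw hwU
    exact hfU w ⟨hclosure hw, hwU⟩
  rw [smul_neg, dist_comm, dist_eq_norm, ← sub_eq_norm_smul_normalize_gradient hf hgrad hmax]
  abel

namespace HasC2Boundary

variable {n : ℕ} {Ω : Set (En n)}

lemma exists_isInwardNormal_near (h : HasC2Boundary Ω) {z₀ : En n} (hz₀ : z₀ ∈ frontier Ω) :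
    ∃ R > 0, ∀ z ∈ frontier Ω ∩ ball z₀ R, ∃ ν, IsInwardNormal Ω R z ν := by
  obtain ⟨U, f, hUopen, hz₀U, hf, hneg, hzero, hgrad⟩ := h z₀ hz₀
  have hnonpos : ∀ w ∈ closure Ω ∩ U, f w ≤ 0 := by
    rintro w ⟨hw, hwU⟩
    rw [closure_eq_self_union_frontier] at hw
    rcases hw with hw | hw
    · exact (hneg.subset ⟨hw, hwU⟩).2.le
    · exact (hzero.subset ⟨hw, hwU⟩).2.le
  obtain ⟨s, hs, hsU⟩ := Metric.isOpen_iff.1 hUopen z₀ hz₀U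
  obtain ⟨R, htangent, hR, hRs⟩ := ((eventually_neg_on_ball_sub_smul_normalize_gradient
    (hf.contDiffAt (hUopen.mem_nhds hz₀U)) (hgrad z₀ ⟨hz₀, hz₀U⟩)).and
    (Ioo_mem_nhdsGT (show 0 < s / 3 by positivity))).exists
  refine ⟨R, hR, fun z ⟨hzΩ, hz⟩ => ?_⟩
  have hzU : z ∈ U := hsU (ball_subset_ball (by linarith) hz)
  have hfz : f z = 0 := (hzero.subset ⟨hzΩ, hzU⟩).2
  have hgradz : gradient f z ≠ 0 := hgrad z ⟨hzΩ, hzU⟩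
  have hν := NormedSpace.norm_normalize hgradz
  refine ⟨-NormedSpace.normalize (gradient f z), by rw [norm_neg, hν], ?_, fun x hx => ?_⟩
  · rw [smul_neg, ← sub_eq_add_neg]
    intro y hy
    have hyU : y ∈ U := hsU <| ball_subset_ball' (by
      have hcenter : dist (z - R • NormedSpace.normalize (gradient f z)) z = R := by
        rw [dist_self_sub_left, norm_smul, hν, mul_one, Real.norm_of_nonneg hR.le]
      linarith [dist_triangle (z - R • NormedSpace.normalize (gradient f z)) z z₀,
        mem_ball.1 hz]) hy
    exact (hneg.superset ⟨hyU, htangent z hz hfz.le y hy⟩).1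
  · exact eq_add_smul_neg_normalize_gradient (hUopen.mem_nhds hzU)
      (fun w hw => (hnonpos w hw).trans_eq hfz.symm)
      ((hf.contDiffAt (hUopen.mem_nhds hzU)).differentiableAt two_ne_zero) hgradz hx

lemma exists_isInwardNormal (h : HasC2Boundary Ω) (hcompact : IsCompact (frontier Ω)) :
    ∃ R > 0, ∀ z ∈ frontier Ω, ∃ ν, IsInwardNormal Ω R z ν := by
  refine hcompact.induction_on (p := fun S => ∃ R > 0, ∀ z ∈ S, ∃ ν, IsInwardNormal Ω R z ν)
    ⟨1, one_pos, fun z hz => hz.elim⟩ ?_ ?_ fun z₀ hz₀ => ?_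
  · rintro S T hST ⟨R, hR, hnormal⟩
    exact ⟨R, hR, fun z hz => hnormal z (hST hz)⟩
  · rintro S T ⟨R₁, hR₁, hnormal₁⟩ ⟨R₂, hR₂, hnormal₂⟩
    refine ⟨min R₁ R₂, lt_min hR₁ hR₂, ?_⟩
    rintro z (hz | hz)
    · exact (hnormal₁ z hz).imp fun ν hν => hν.mono (min_le_left _ _)
    · exact (hnormal₂ z hz).imp fun ν hν => hν.mono (min_le_right _ _)
  · obtain ⟨R, hR, hnormal⟩ := h.exists_isInwardNormal_near hz₀
    exact ⟨_, inter_mem_nhdsWithin _ (ball_mem_nhds z₀ hR), R, hR, hnormal⟩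

theorem exists_hasInteriorBalls (h : HasC2Boundary Ω) (hΩ : IsOpen Ω)
    (hΩbdd : Bornology.IsBounded Ω) : ∃ r > 0, HasInteriorBalls Ω r := by
  obtain ⟨R, hR, hnormal⟩ := h.exists_isInwardNormal <|
    hΩbdd.isCompact_closure.of_isClosed_subset isClosed_frontier frontier_subset_closure
  refine ⟨R, hR, fun x hx => ?_⟩
  rcases (frontier Ω).eq_empty_or_nonempty with hempty | hne
  · have huniv : Ω = univ :=
      (frontier_eq_empty_iff.1 hempty).resolve_left (nonempty_of_mem hx).ne_empty
    exact ⟨x, huniv ▸ subset_univ _, by simp⟩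
  have hball := ball_infDist_frontier_subset hΩ hx
  rcases le_total R (infDist x (frontier Ω)) with hfar | hnear
  · exact ⟨x, (ball_subset_ball hfar).trans hball, by simp⟩
  · obtain ⟨z, hz, hxz⟩ := isClosed_frontier.exists_infDist_eq_dist hne x
    rw [hxz] at hball hnear ⊢
    obtain ⟨ν, hν⟩ := hnormal z hz
    exact ⟨z + R • ν, hν.ball_subset, by
      rw [hν.dist_add_smul hball hnear, sub_sub_cancel]; exact min_le_right _ _⟩

end HasC2Boundary

end InwardNormals

section GlobalEstimate

variable {n : ℕ} {Ω : Set (En n)} {lam : ℝ}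

lemma exists_mul_min_infDist_le [NeZero n] (hlam : 0 < lam) (Lam : ℝ) (hΩ : IsOpen Ω)
    (hconn : IsPreconnected Ω) (hΩbdd : Bornology.IsBounded Ω) {r δ : ℝ} (hr : 0 < r)
    (hballs : HasInteriorBalls Ω r) (hδ : 0 < δ) :
    ∃ ε > 0, ∃ μ > 0, ∀ x₀, ball x₀ δ ⊆ Ω → ∀ u, IsNonnegSupersolution Ω lam Lam ε u →
      (∀ x ∈ ball x₀ δ, 1 ≤ u x) → ∀ x ∈ Ω, μ * min r (infDist x (frontier Ω)) ≤ u x := by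
  obtain ⟨ε₁, hε₁, μ₁, hμ₁, hprop⟩ := propagatesPositivity_of_isCompact (Lam := Lam) hlam hΩ hconn
    hδ ((isCompact_setOf_ball_subset hΩbdd hδ).prod
      (isCompact_setOf_ball_subset hΩbdd (half_pos hr)))
    (prod_mono (fun y hy => hy (mem_ball_self hδ)) fun y hy => hy (mem_ball_self (half_pos hr)))
  obtain ⟨ε₂, hε₂, μ₂, hμ₂, hhopf⟩ :=
    exists_mul_sub_dist_le_of_ball_subset (n := n) hlam Lam (half_pos hr) hr
  refine ⟨min ε₁ (μ₁ * ε₂), by positivity, μ₁ * μ₂, by positivity,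
    fun x₀ hx₀ u hu hone x hx => ?_⟩
  obtain ⟨y, hyr, hdepth⟩ := hballs x hx
  have hcore : ∀ z ∈ ball y (r / 2), μ₁ ≤ u z := by
    intro z hz
    have hzr : ball z (r / 2) ⊆ Ω :=
      (ball_subset_ball' (by linarith [mem_ball.1 hz])).trans hyr
    simpa only [one_mul] using hprop (x₀, z) ⟨hx₀, hzr⟩ 1 one_pos u
      (hu.mono (by rw [one_mul]; exact min_le_left _ _)) hone
  calc μ₁ * μ₂ * min r (infDist x (frontier Ω)) ≤ μ₁ * μ₂ * (r - dist x y) := by gcongr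
    _ ≤ u x := hhopf Ω y hyr μ₁ hμ₁ u (hu.mono (min_le_right _ _)) hcore x hx

theorem exists_mul_infDist_le [NeZero n] (hlam : 0 < lam) (Lam : ℝ) (hΩ : IsOpen Ω)
    (hconn : IsPreconnected Ω) (hΩbdd : Bornology.IsBounded Ω) {r δ : ℝ} (hr : 0 < r)
    (hballs : HasInteriorBalls Ω r) (hδ : 0 < δ) :
    ∃ ε > 0, ∃ μ > 0, ∀ x₀, ball x₀ δ ⊆ Ω → ∀ u, IsNonnegSupersolution Ω lam Lam ε u →
      (∀ x ∈ ball x₀ δ, 1 ≤ u x) → ∀ x ∈ Ω, μ * infDist x (frontier Ω) ≤ u x := by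
  obtain ⟨ε, hε, μ, hμ, hbound⟩ := exists_mul_min_infDist_le hlam Lam hΩ hconn hΩbdd hr hballs hδ
  obtain ⟨κ, hκ, hmin⟩ := exists_mul_le_min_infDist hΩbdd hr
  refine ⟨ε, hε, μ * κ, by positivity, fun x₀ hx₀ u hu hone x hx => ?_⟩
  calc μ * κ * infDist x (frontier Ω) = μ * (κ * infDist x (frontier Ω)) := mul_assoc _ _ _
    _ ≤ μ * min r (infDist x (frontier Ω)) := by gcongr; exact hmin x hx
    _ ≤ u x := hbound x₀ hx₀ u hu hone x hx

end GlobalEstimate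

theorem strengthened_hopf_lemma_general
    {n : ℕ} (lam Lam : ℝ) (hlam : 0 < lam)
    (Ω : Set (En n)) (hΩopen : IsOpen Ω) (hΩconn : IsPreconnected Ω)
    (hΩbdd : Bornology.IsBounded Ω) (r : ℝ) (hr : 0 < r) (hΩballs : HasInteriorBalls Ω r)
    (δ : ℝ) (hδ : 0 < δ) :
    ∃ εb > (0 : ℝ), ∃ μb > (0 : ℝ),
      ∀ x₀ : En n, Metric.ball x₀ δ ⊆ Ω →
      ∀ (a : En n → Matrix (Fin n) (Fin n) ℝ) (b : En n → En n) (c : En n → ℝ),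
        EllipticCoeffs Ω a b c lam Lam →
      ∀ u : En n → ℝ, LowerSemicontinuousOn u Ω →
        IsViscositySupersolution (linOp a b c) (fun _ => εb) Ω u →
        (∀ x ∈ Ω, 0 ≤ u x) →
        (∀ x ∈ Metric.ball x₀ δ, 1 ≤ u x) →
        ∀ x ∈ Ω, μb * Metric.infDist x (frontier Ω) ≤ u x := by
  rcases eq_zero_or_neZero n with rfl | hn
  · refine ⟨1, one_pos, 1, one_pos, fun _ _ _ _ _ _ u _ _ hu _ x hx => ?_⟩
    rw [(isClopen_discrete Ω).frontier_eq, infDist_empty, mul_zero]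
    exact hu x hx
  · obtain ⟨ε, hε, μ, hμ, hbound⟩ :=
      exists_mul_infDist_le hlam Lam hΩopen hΩconn hΩbdd hr hΩballs hδ
    exact ⟨ε, hε, μ, hμ, fun x₀ hx₀ a b c hcoeffs u hlsc hvisc hnonneg =>
      hbound x₀ hx₀ u ⟨a, b, c, hcoeffs, hlsc, hvisc, hnonneg⟩⟩

/-- **Lemma 1.2 (strengthened Hopf lemma).** In a bounded `C²` domain `Ω`, there are
constants `εb, μb > 0` depending only on `n, λ, Λ, δ, Ω` such that every nonnegative
viscosity supersolution of `Lu ≤ εb` which is `≥ 1` on some ball of radius `δ` contained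
in `Ω` satisfies `u(x) ≥ μb · dist(x, ∂Ω)`. -/
theorem strengthened_hopf_lemma
    {n : ℕ} (lam Lam : ℝ) (hlam : 0 < lam) (hLam : 0 < Lam)
    (Ω : Set (En n)) (hΩopen : IsOpen Ω) (hΩconn : IsConnected Ω)
    (hΩbdd : Bornology.IsBounded Ω) (hΩC2 : HasC2Boundary Ω)
    (δ : ℝ) (hδ : 0 < δ) :
    ∃ εb > (0 : ℝ), ∃ μb > (0 : ℝ),
      ∀ x₀ : En n, Metric.ball x₀ δ ⊆ Ω →
      ∀ (a : En n → Matrix (Fin n) (Fin n) ℝ) (b : En n → En n) (c : En n → ℝ),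
        EllipticCoeffs Ω a b c lam Lam →
      ∀ u : En n → ℝ, LowerSemicontinuousOn u Ω →
        IsViscositySupersolution (linOp a b c) (fun _ => εb) Ω u →
        (∀ x ∈ Ω, 0 ≤ u x) →
        (∀ x ∈ Metric.ball x₀ δ, 1 ≤ u x) →
        ∀ x ∈ Ω, μb * Metric.infDist x (frontier Ω) ≤ u x := by
  obtain ⟨r, hr, hΩballs⟩ := hΩC2.exists_hasInteriorBalls hΩopen hΩbdd
  exact strengthened_hopf_lemma_general lam Lam hlam Ω hΩopen hΩconn.isPreconnected hΩbdd r hr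
    hΩballs δ hδ
end
end
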